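/- Let 0 → A → B → C → 0 be a non-split short exact sequence of graded Λ-modules (with degree-preserving maps) in which A and C are indecomposable graded Cohen–Macaulay Λ-modules. Then there exist integers s < s' < t < t' < s + n such that A ≅ (s,t), B ≅ (s,t') ⊕ (s',t) and C ≅ (s',t') as graded Λ-modules. -/

import Mathlib

set_option synthInstance.maxHeartbeats 1000000
set_option maxHeartbeats 1000000

open Polynomial Matrix

noncomputable section

/-- The exponent `c_{ij}` (with 0-based indices `i j : Fin n`, corresponding to the 1-based
`c_{i+1,j+1} = δ_{i+1>j+1} + δ_{i+1>j+2} − δ_{(i+1,j+1)=(1,n)}`). -/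
def cExp (n : ℕ) (i j : Fin n) : ℤ :=
  (if (j : ℕ) < (i : ℕ) then 1 else 0) + (if (j : ℕ) + 1 < (i : ℕ) then 1 else 0)
    - (if (i : ℕ) = 0 ∧ (j : ℕ) = n - 1 then 1 else 0)

/-- The subset `x^c · K[x]` of `K(x)`. -/
def xPow (K : Type*) [Field K] (c : ℤ) : Set (RatFunc K) :=
  {f | ∃ p : Polynomial K, f = RatFunc.X ^ c * algebraMap (Polynomial K) (RatFunc K) p}

/-- The carrier set of the tiled order `Λ ⊆ M_n(K(x))`:
matrices whose `(i,j)` entry lies in `x^{c_{ij}}·K[x]`. -/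
def lambdaCarrier (K : Type*) [Field K] (n : ℕ) : Set (Matrix (Fin n) (Fin n) (RatFunc K)) :=
  {M | ∀ i j, M i j ∈ xPow K (cExp n i j)}

/-- Exponent pattern of the module `(i,j)` (1-based `i j`; `k : ℕ` is a 0-based coordinate,
so the 1-based coordinate is `k+1`): `0` for `k+1 ≤ i`, `1` for `i < k+1 ≤ j`, `2` otherwise. -/
def dExp (i j k : ℕ) : ℤ := if k + 1 ≤ i then 0 else if k + 1 ≤ j then 1 else 2

/-- The carrier set of the `Λ`-module `(i,j)` inside the column space `K(x)^n`. -/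
def ijSet (K : Type*) [Field K] (n : ℕ) (i j : ℕ) : Set (Fin n → RatFunc K) :=
  {v | ∀ k : Fin n, v k ∈ xPow K (dExp i j (k : ℕ))}

/-- Column vectors form a module over the matrix ring via `mulVec`. -/
instance matVecModule (K : Type*) [Field K] (n : ℕ) :
    Module (Matrix (Fin n) (Fin n) (RatFunc K)) (Fin n → RatFunc K) where
  smul M v := M.mulVec v
  one_smul v := Matrix.one_mulVec v
  mul_smul M N v := (Matrix.mulVec_mulVec v M N).symm
  smul_zero M := Matrix.mulVec_zero M
  smul_add M u v := Matrix.mulVec_add M u v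
  add_smul M N v := Matrix.add_mulVec M N v
  zero_smul v := Matrix.zero_mulVec v

/-- The set of homogeneous elements `c·x^m` (`c ∈ K`) of degree `m` in `K(x)`. -/
def homogSet (K : Type) [Field K] (m : ℤ) : Set (RatFunc K) :=
  {f | ∃ c : K, f = algebraMap K (RatFunc K) c * RatFunc.X ^ m}

/-- The additive subgroup `(K·x^m)^n` of the column space. -/
def homogGroup (K : Type) [Field K] (n : ℕ) (m : ℤ) : AddSubgroup (Fin n → RatFunc K) where
  carrier := {v | ∀ k : Fin n, v k ∈ homogSet K m}
  add_mem' := by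
    rintro u v hu hv k
    obtain ⟨c, hc⟩ := hu k
    obtain ⟨c', hc'⟩ := hv k
    exact ⟨c + c', by simp [hc, hc', add_mul]⟩
  zero_mem' := fun k => ⟨0, by simp⟩
  neg_mem' := by
    rintro v hv k
    obtain ⟨c, hc⟩ := hv k
    exact ⟨-c, by simp [hc]⟩

section Graded

variable {K : Type} [Field K] {n : ℕ}
variable (Λ : Subalgebra (Polynomial K) (Matrix (Fin n) (Fin n) (RatFunc K)))

/-- `u ∈ Λ` is homogeneous of degree `m`: all its entries lie in `K·x^m`. -/
def LambdaDeg (u : ↥Λ) (m : ℤ) : Prop :=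
  ∀ i j, (↑u : Matrix (Fin n) (Fin n) (RatFunc K)) i j ∈ homogSet K m

/-- `g` is a grading making the `Λ`-module `M` a graded `Λ`-module:
`M = ⊕_m g m` and `Λ_a · M_b ⊆ M_{a+b}`. -/
def IsModGrading (M : Type*) [AddCommGroup M] [Module ↥Λ M] (g : ℤ → AddSubgroup M) : Prop :=
  DirectSum.IsInternal g ∧
    ∀ (a b : ℤ) (u : ↥Λ), LambdaDeg Λ u a → ∀ v ∈ g b, u • v ∈ g (a + b)

/-- A `Λ`-submodule is graded (w.r.t. the grading `g`) if it is generated by its homogeneous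
elements. -/
def IsGradedSubmodule {M : Type*} [AddCommGroup M] [Module ↥Λ M] (g : ℤ → AddSubgroup M)
    (A : Submodule ↥Λ M) : Prop :=
  A ≤ Submodule.span ↥Λ ((A : Set M) ∩ ⋃ m : ℤ, (g m : Set M))

/-- The graded module `(M, g)` is indecomposable: it is nonzero and is not the direct sum of
two nonzero graded submodules. -/
def GradedIndecomposable (M : Type*) [AddCommGroup M] [Module ↥Λ M]
    (g : ℤ → AddSubgroup M) : Prop :=
  Nontrivial M ∧
    ¬ ∃ A B : Submodule ↥Λ M, IsGradedSubmodule Λ g A ∧ IsGradedSubmodule Λ g B ∧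
      IsCompl A B ∧ A ≠ ⊥ ∧ B ≠ ⊥

/-- The grading of the concrete module `(i,j)`: the degree-`m` part is
`(i,j) ∩ (K·x^m)^n`. -/
def gEij (E : ℕ → ℕ → Submodule ↥Λ (Fin n → RatFunc K)) (i j : ℕ) (m : ℤ) :
    AddSubgroup ↥(E i j) :=
  (homogGroup K n m).comap (E i j).subtype.toAddMonoidHom

end Graded

/-- The residue of `a` in `{1, …, n}` modulo `n`. -/
def rres (n : ℕ) (a : ℤ) : ℤ := (a - 1) % (n : ℤ) + 1

/-- For integers `a < b` with `0 < b − a < n`, the base pair `(i, j)` (with `1 ≤ i < j ≤ n`)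
and the shift `σ` such that the extended module `(a,b)` equals `(i,j)(σ)`:
`(i+kn, j+kn) = (i,j)(2k)` and `(j+kn, i+(k+1)n) = (i,j)(2k+1)`. -/
def baseIdx (n : ℕ) (a b : ℤ) : ℕ × ℕ × ℤ :=
  if rres n a < rres n b then
    ((rres n a).toNat, (rres n b).toNat, 2 * ((a - rres n a) / (n : ℤ)))
  else
    ((rres n b).toNat, (rres n a).toNat, 2 * ((a - rres n a) / (n : ℤ)) + 1)

section GradedIso

variable {K : Type} [Field K] {n : ℕ}
variable (Λ : Subalgebra (Polynomial K) (Matrix (Fin n) (Fin n) (RatFunc K)))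
variable (E : ℕ → ℕ → Submodule ↥Λ (Fin n → RatFunc K))

/-- The graded `Λ`-module `(M, g)` is isomorphic (by a degree-preserving `Λ`-linear
isomorphism) to the extended module `(a,b)`, i.e. to the shift `(i,j)(σ)` where
`(i, j, σ) = baseIdx n a b`. -/
def GradedIsoTo (M : Type*) [AddCommGroup M] [Module ↥Λ M] (g : ℤ → AddSubgroup M)
    (a b : ℤ) : Prop :=
  ∃ e : M ≃ₗ[↥Λ] ↥(E (baseIdx n a b).1 (baseIdx n a b).2.1),
    ∀ (m : ℤ) (v : M), v ∈ g m ↔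
      e v ∈ gEij Λ E (baseIdx n a b).1 (baseIdx n a b).2.1 ((baseIdx n a b).2.2 + m)

/-- The graded `Λ`-module `(M, g)` is isomorphic (by a degree-preserving `Λ`-linear
isomorphism) to the direct sum of the extended modules `(a,b)` and `(a',b')`. -/
def GradedIsoToSum (M : Type*) [AddCommGroup M] [Module ↥Λ M] (g : ℤ → AddSubgroup M)
    (a b a' b' : ℤ) : Prop :=
  ∃ e : M ≃ₗ[↥Λ]
      (↥(E (baseIdx n a b).1 (baseIdx n a b).2.1) ×
        ↥(E (baseIdx n a' b').1 (baseIdx n a' b').2.1)),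
    ∀ (m : ℤ) (v : M), v ∈ g m ↔
      e v ∈ (gEij Λ E (baseIdx n a b).1 (baseIdx n a b).2.1
              ((baseIdx n a b).2.2 + m)).prod
            (gEij Λ E (baseIdx n a' b').1 (baseIdx n a' b').2.1
              ((baseIdx n a' b').2.2 + m))

end GradedIso

universe u

section Components

variable {M : Type*} [AddCommGroup M] {g : ℤ → AddSubgroup M}

/-- An internal direct sum decomposition as an additive equivalence. -/
def internalEquiv (hg : DirectSum.IsInternal g) : (DirectSum ℤ fun m => g m) ≃+ M :=
  AddEquiv.ofBijective (DirectSum.coeAddMonoidHom g) hg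

/-- The projection onto the degree `m` part of an internal direct sum decomposition. -/
def homogPart (hg : DirectSum.IsInternal g) (m : ℤ) : M →+ M :=
  AddMonoidHom.mk' (fun a => ((internalEquiv hg).symm a m : M)) fun a b => by simp

variable (hg : DirectSum.IsInternal g)

lemma homogPart_mem (m : ℤ) (a : M) : homogPart hg m a ∈ g m :=
  ((internalEquiv hg).symm a m).2

lemma internalEquiv_symm_of_mem {m : ℤ} {a : M} (ha : a ∈ g m) :
    (internalEquiv hg).symm a = DirectSum.of (fun i => g i) m ⟨a, ha⟩ := by
  rw [AddEquiv.symm_apply_eq]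
  exact (DirectSum.coeAddMonoidHom_of g m ⟨a, ha⟩).symm

lemma homogPart_same {m : ℤ} {a : M} (ha : a ∈ g m) : homogPart hg m a = a := by
  simp [homogPart, internalEquiv_symm_of_mem hg ha]

lemma homogPart_of_ne {m j : ℤ} {a : M} (ha : a ∈ g m) (h : j ≠ m) :
    homogPart hg j a = 0 := by
  simp [homogPart, internalEquiv_symm_of_mem hg ha, DirectSum.of_eq_of_ne _ _ _ h]

include hg in
lemma homog_induction {p : M → Prop} (a : M) (zero : p 0)
    (homog : ∀ m, ∀ a ∈ g m, p a) (add : ∀ a b, p a → p b → p (a + b)) : p a := by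
  obtain ⟨x, rfl⟩ := hg.2 a
  induction x using DirectSum.induction_on with
  | zero => simpa using zero
  | of i x => simpa using homog i x x.2
  | add x y hx hy => simpa using add _ _ hx hy

lemma eq_zero_of_homogPart {a : M} (h : ∀ m, homogPart hg m a = 0) : a = 0 := by
  have : (internalEquiv hg).symm a = 0 := by
    ext m
    simpa [homogPart] using h m
  simpa using this

lemma mem_of_homogPart {a : M} {m : ℤ} (h : ∀ j, j ≠ m → homogPart hg j a = 0) : a ∈ g m := by
  have : a - homogPart hg m a = 0 := by
    refine eq_zero_of_homogPart hg fun j => ?_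
    rcases eq_or_ne j m with rfl | hj
    · rw [map_sub, homogPart_same hg (homogPart_mem hg j a), sub_self]
    · rw [map_sub, h j hj, homogPart_of_ne hg (homogPart_mem hg m a) hj, sub_self]
  rw [sub_eq_zero.1 this]
  exact homogPart_mem hg m a

lemma exists_bound_homogPart (a : M) :
    ∃ N : ℕ, ∀ j : ℤ, (N : ℤ) < |j| → homogPart hg j a = 0 := by
  refine homog_induction hg (p := fun a => ∃ N : ℕ, ∀ j : ℤ, (N : ℤ) < |j| → homogPart hg j a = 0)
    a ⟨0, by simp⟩ (fun m a ha => ⟨m.natAbs, fun j hj => ?_⟩) ?_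
  · refine homogPart_of_ne hg ha ?_
    rintro rfl
    simp at hj
  · rintro a b ⟨N, hN⟩ ⟨N', hN'⟩
    refine ⟨max N N', fun j hj => ?_⟩
    rw [map_add, hN j (by push_cast at hj; omega), hN' j (by push_cast at hj; omega), add_zero]

/-- The additive map given on homogeneous elements of degree `m` by `h m`. -/
def homogLift {N : Type*} [AddCommGroup N] (h : ℤ → M →+ N) : M →+ N :=
  (DirectSum.toAddMonoid fun m => (h m).comp (g m).subtype).comp
    (internalEquiv hg).symm.toAddMonoidHom

lemma homogLift_of_mem {N : Type*} [AddCommGroup N] (h : ℤ → M →+ N) {m : ℤ} {a : M}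
    (ha : a ∈ g m) : homogLift hg h a = h m a := by
  simp [homogLift, internalEquiv_symm_of_mem hg ha]

end Components

section Order

variable {K : Type} [Field K] {n : ℕ}
variable {Λ : Subalgebra K[X] (Matrix (Fin n) (Fin n) (RatFunc K))}

lemma zpow_mem_xPow {c r : ℤ} (h : c ≤ r) : (RatFunc.X : RatFunc K) ^ r ∈ xPow K c := by
  refine ⟨X ^ (r - c).toNat, ?_⟩
  rw [map_pow, RatFunc.algebraMap_X, ← zpow_natCast, ← zpow_add₀ RatFunc.X_ne_zero]
  congr 1
  omega

lemma zero_mem_xPow (c : ℤ) : (0 : RatFunc K) ∈ xPow K c := ⟨0, by simp⟩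

lemma add_mem_xPow {c : ℤ} {a b : RatFunc K} (ha : a ∈ xPow K c) (hb : b ∈ xPow K c) :
    a + b ∈ xPow K c := by
  obtain ⟨p, rfl⟩ := ha
  obtain ⟨q, rfl⟩ := hb
  exact ⟨p + q, by rw [map_add, mul_add]⟩

variable (hΛ : (Λ : Set (Matrix (Fin n) (Fin n) (RatFunc K))) = lambdaCarrier K n)

/-- The element of the order with single nonzero entry `x^r` at position `(i, j)`. -/
def matUnit (i j : Fin n) (r : ℤ) (h : cExp n i j ≤ r) : Λ :=
  ⟨Matrix.single i j (RatFunc.X ^ r), by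
    rw [← SetLike.mem_coe, hΛ]
    intro a b
    by_cases hab : i = a ∧ j = b
    · obtain ⟨rfl, rfl⟩ := hab
      simpa using zpow_mem_xPow h
    · rw [Matrix.single_apply, if_neg hab]
      exact zero_mem_xPow _⟩

lemma matUnit_mul {i j k : Fin n} {r s t : ℤ} (h : cExp n i j ≤ r) (h' : cExp n j k ≤ s)
    (h'' : cExp n i k ≤ t) (ht : r + s = t) :
    matUnit hΛ i j r h * matUnit hΛ j k s h' = matUnit hΛ i k t h'' := by
  apply Subtype.ext
  simp [matUnit, ← ht, zpow_add₀ (RatFunc.X_ne_zero (K := K))]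

lemma matUnit_mul_of_ne {i j j' k : Fin n} {r s : ℤ} (h : cExp n i j ≤ r)
    (h' : cExp n j' k ≤ s) (hj : j ≠ j') :
    matUnit hΛ i j r h * matUnit hΛ j' k s h' = 0 := by
  apply Subtype.ext
  simp [matUnit, hj]

lemma pow_smul_matUnit {i j : Fin n} {r t : ℤ} (k : ℕ) (h : cExp n i j ≤ r)
    (h' : cExp n i j ≤ t) (ht : r + k = t) :
    (X : K[X]) ^ k • matUnit hΛ i j r h = matUnit hΛ i j t h' := by
  apply Subtype.ext
  simp [matUnit, ← ht, zpow_add₀ (RatFunc.X_ne_zero (K := K))]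
  rw [Algebra.smul_def, map_pow, RatFunc.algebraMap_X, mul_comm]

lemma lambdaDeg_matUnit {i j : Fin n} {r : ℤ} (h : cExp n i j ≤ r) :
    LambdaDeg Λ (matUnit hΛ i j r h) r := by
  intro a b
  by_cases hab : i = a ∧ j = b
  · obtain ⟨rfl, rfl⟩ := hab
    exact ⟨1, by simp [matUnit]⟩
  · exact ⟨0, by simp [matUnit, hab]⟩

lemma lambdaDeg_C (c : K) : LambdaDeg Λ (algebraMap K[X] Λ (C c)) 0 := by
  intro a b
  have h : ((algebraMap K[X] Λ (C c) : Λ) : Matrix (Fin n) (Fin n) (RatFunc K)) =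
    algebraMap K[X] _ (C c) := rfl
  rw [h, Matrix.algebraMap_matrix_apply]
  split_ifs
  · exact ⟨c, by simp [RatFunc.algebraMap_eq_C]⟩
  · exact ⟨0, by simp⟩

lemma lambdaDeg_X : LambdaDeg Λ (algebraMap K[X] Λ X) 1 := by
  intro a b
  have h : ((algebraMap K[X] Λ X : Λ) : Matrix (Fin n) (Fin n) (RatFunc K)) =
    algebraMap K[X] _ X := rfl
  rw [h, Matrix.algebraMap_matrix_apply]
  split_ifs
  · exact ⟨1, by simp⟩
  · exact ⟨0, by simp⟩

lemma sum_matUnit (h : ∀ i : Fin n, cExp n i i ≤ 0) : ∑ i, matUnit hΛ i i 0 (h i) = 1 := by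
  apply Subtype.ext
  rw [AddSubmonoidClass.coe_finsetSum]
  ext a b
  simp [matUnit, Matrix.sum_apply, Matrix.single_apply, Matrix.one_apply, ite_and]

/-- Multiplication of a matrix unit in the first row with an element of the order, cleared of
denominators. -/
lemma matUnit_mul_eq_sum (z : Fin n) (hz : ∀ i, cExp n z i ≤ 0) (i : Fin n) (u : Λ) :
    ∃ p : Fin n → K[X],
      (X : K[X]) • (matUnit hΛ z i 0 (hz i) * u) = ∑ l, p l • matUnit hΛ z l 0 (hz l) ∧
      ∀ l, algebraMap K[X] (RatFunc K) (p l) =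
        RatFunc.X * (u : Matrix (Fin n) (Fin n) (RatFunc K)) i l := by
  have hu : (u : Matrix (Fin n) (Fin n) (RatFunc K)) ∈ lambdaCarrier K n := by
    rw [← hΛ]; exact u.2
  have : ∀ l, ∃ p : K[X], algebraMap K[X] (RatFunc K) p =
        RatFunc.X * (u : Matrix (Fin n) (Fin n) (RatFunc K)) i l := by
    intro l
    obtain ⟨q, hq⟩ := hu i l
    have hc : -1 ≤ cExp n i l := by unfold cExp; split_ifs <;> omega
    refine ⟨X ^ (1 + cExp n i l).toNat * q, ?_⟩
    rw [hq, map_mul, map_pow, RatFunc.algebraMap_X, ← zpow_natCast, Int.toNat_of_nonneg (by omega),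
      zpow_add₀ RatFunc.X_ne_zero, zpow_one, mul_assoc]
  choose p hp using this
  refine ⟨p, ?_, hp⟩
  apply Subtype.ext
  rw [AddSubmonoidClass.coe_finsetSum]
  ext a b
  simp only [matUnit, Matrix.sum_apply, MulMemClass.coe_mul, SetLike.val_smul, zpow_zero,
    Matrix.smul_apply]
  simp only [Algebra.smul_def, hp, RatFunc.algebraMap_X]
  rcases eq_or_ne a z with rfl | ha
  · simp [Matrix.single_apply]
  · simp [ha, ha.symm]
end Order

section Fiber

lemma cExp_diag_nonpos {n : ℕ} (i : Fin n) : cExp n i i ≤ 0 := by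
  unfold cExp
  split_ifs <;> omega

lemma cExp_le_two {n : ℕ} (i j : Fin n) : cExp n i j ≤ 2 := by
  unfold cExp
  split_ifs <;> omega

/-- The first index. -/
def firstIdx {n : ℕ} (hn : 3 ≤ n) : Fin n := ⟨0, by omega⟩

lemma cExp_firstIdx_nonpos {n : ℕ} (hn : 3 ≤ n) (i : Fin n) : cExp n (firstIdx hn) i ≤ 0 := by
  unfold cExp firstIdx
  simp only
  split_ifs <;> omega

lemma cExp_triangle {n : ℕ} (hn : 3 ≤ n) (i j k : Fin n) :
    cExp n i k ≤ cExp n i j + cExp n j k := by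
  unfold cExp
  split_ifs <;> omega

variable {K : Type} [Field K] {n : ℕ} (hn : 3 ≤ n)
variable {Λ : Subalgebra K[X] (Matrix (Fin n) (Fin n) (RatFunc K))}
variable (hΛ : (Λ : Set (Matrix (Fin n) (Fin n) (RatFunc K))) = lambdaCarrier K n)

/-- The matrix unit at position `(1, l)`, in degree zero. -/
def rowUnit (l : Fin n) : Λ := matUnit hΛ (firstIdx hn) l 0 (cExp_firstIdx_nonpos hn l)

/-- The diagonal idempotent at position `(l, l)`. -/
def diagUnit (l : Fin n) : Λ := matUnit hΛ l l 0 (cExp_diag_nonpos l)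

lemma rowUnit_mul_diagUnit (l : Fin n) :
    rowUnit hn hΛ l * diagUnit hΛ l = rowUnit hn hΛ l :=
  matUnit_mul hΛ _ _ _ (by simp)

lemma rowUnit_mul_diagUnit_of_ne {l k : Fin n} (h : l ≠ k) :
    rowUnit hn hΛ l * diagUnit hΛ k = 0 :=
  matUnit_mul_of_ne hΛ _ _ h

lemma rowUnit_first_mul (l : Fin n) :
    rowUnit hn hΛ (firstIdx hn) * rowUnit hn hΛ l = rowUnit hn hΛ l :=
  matUnit_mul hΛ _ _ _ (by simp)

section Module

variable (M : Type*) [AddCommGroup M] [Module Λ M] [Module K[X] M] [IsScalarTower K[X] Λ M]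
  [Module K M] [IsScalarTower K K[X] M]

lemma C_smul_eq {M : Type*} [AddCommGroup M] [Module K[X] M] [Module K M]
    [IsScalarTower K K[X] M] (c : K) (a : M) : (C c : K[X]) • a = c • a := by
  rw [← Polynomial.algebraMap_eq, algebraMap_smul]

include Λ in
lemma smul_smul_comm_scalar {M : Type*} [AddCommGroup M] [Module Λ M] [Module K[X] M]
    [IsScalarTower K[X] Λ M] [Module K M] [IsScalarTower K K[X] M]
    (c : K) (u : Λ) (a : M) : u • c • a = c • u • a := by
  rw [← C_smul_eq c a, ← C_smul_eq c (u • a), smul_comm]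

/-- The action of an element of the order as a `K`-linear map. -/
def actLin (u : Λ) : M →ₗ[K] M where
  toFun a := u • a
  map_add' := smul_add u
  map_smul' c a := smul_smul_comm_scalar c u a

/-- The relations defining the fibre at `x = 1` of the first component of `M`. -/
def fiberRel : Submodule K M :=
  (LinearMap.range ((actLin M (algebraMap K[X] Λ X - 1)).comp
    (actLin M (rowUnit hn hΛ (firstIdx hn))))).comap (actLin M (rowUnit hn hΛ (firstIdx hn)))

variable {M} in
lemma mem_fiberRel {a : M} : a ∈ fiberRel hn hΛ M ↔ ∃ b : M,
    (X : K[X]) • rowUnit hn hΛ (firstIdx hn) • b - rowUnit hn hΛ (firstIdx hn) • b =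
      rowUnit hn hΛ (firstIdx hn) • a := by
  simp [fiberRel, actLin, sub_smul]

/-- The fibre at `x = 1` of the first component of `M`. -/
abbrev Fiber : Type _ := M ⧸ fiberRel hn hΛ M

variable {M}

/-- The map from `M` to its fibre picking the `l`-th component. -/
def fiberMap (l : Fin n) : M →ₗ[K] Fiber hn hΛ M :=
  (fiberRel hn hΛ M).mkQ.comp (actLin M (rowUnit hn hΛ l))

lemma mkQ_X_smul (a : M) : (fiberRel hn hΛ M).mkQ ((X : K[X]) • a) = (fiberRel hn hΛ M).mkQ a := by
  rw [← sub_eq_zero, ← map_sub, Submodule.mkQ_apply, Submodule.Quotient.mk_eq_zero,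
    mem_fiberRel]
  exact ⟨a, by rw [smul_sub, smul_comm]⟩

lemma mkQ_X_pow_smul (k : ℕ) (a : M) :
    (fiberRel hn hΛ M).mkQ ((X : K[X]) ^ k • a) = (fiberRel hn hΛ M).mkQ a := by
  induction k with
  | zero => simp
  | succ k ih => rw [pow_succ', mul_smul, mkQ_X_smul, ih]

lemma fiberMap_first (a : M) :
    fiberMap hn hΛ (firstIdx hn) a = (fiberRel hn hΛ M).mkQ a := by
  rw [← sub_eq_zero, fiberMap, LinearMap.comp_apply, ← map_sub, Submodule.mkQ_apply,
    Submodule.Quotient.mk_eq_zero, mem_fiberRel]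
  refine ⟨0, ?_⟩
  simp [actLin, smul_sub, smul_smul, rowUnit_first_mul]

lemma fiberMap_apply (l : Fin n) (a : M) :
    fiberMap hn hΛ l a = (fiberRel hn hΛ M).mkQ (rowUnit hn hΛ l • a) := rfl

lemma mkQ_matUnit_smul {l : Fin n} {r s : ℤ} (h : cExp n (firstIdx hn) l ≤ r)
    (h' : cExp n (firstIdx hn) l ≤ s) (a : M) :
    (fiberRel hn hΛ M).mkQ (matUnit hΛ (firstIdx hn) l r h • a) =
      (fiberRel hn hΛ M).mkQ (matUnit hΛ (firstIdx hn) l s h' • a) := by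
  wlog hrs : r ≤ s generalizing r s
  · exact (this h' h (by omega)).symm
  rw [← pow_smul_matUnit hΛ (s - r).toNat h h' (by omega), smul_assoc, mkQ_X_pow_smul]

lemma fiberMap_matUnit_smul {i j : Fin n} {r : ℤ} (h : cExp n i j ≤ r) (a : M) :
    fiberMap hn hΛ i (matUnit hΛ i j r h • a) = fiberMap hn hΛ j a := by
  have hc : cExp n (firstIdx hn) j ≤ r := by
    linarith [cExp_triangle hn (firstIdx hn) i j, cExp_firstIdx_nonpos hn i]
  rw [fiberMap_apply, smul_smul, rowUnit, matUnit_mul hΛ _ _ hc (by simp)]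
  exact mkQ_matUnit_smul hn hΛ _ _ a

lemma fiberMap_diagUnit_smul (l : Fin n) (a : M) :
    fiberMap hn hΛ l (diagUnit hΛ l • a) = fiberMap hn hΛ l a :=
  fiberMap_matUnit_smul hn hΛ _ a

omit [Module K[X] M] [IsScalarTower K[X] Λ M] [Module K M] [IsScalarTower K K[X] M] in
lemma sum_diagUnit_smul (a : M) : ∑ l, diagUnit hΛ l • a = a := by
  rw [← Finset.sum_smul]
  unfold diagUnit
  rw [sum_matUnit, one_smul]

section Graded

variable {g : ℤ → AddSubgroup M} (hg : IsModGrading Λ M g)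

include hg

omit [Module K[X] M] [IsScalarTower K[X] Λ M] [Module K M] [IsScalarTower K K[X] M] in
lemma matUnit_smul_mem {i j : Fin n} {r m s : ℤ} (h : cExp n i j ≤ r) {a : M} (ha : a ∈ g m)
    (hs : m + r = s) : matUnit hΛ i j r h • a ∈ g s := by
  rw [← hs, add_comm]
  exact hg.2 _ _ _ (lambdaDeg_matUnit hΛ h) _ ha

omit [Module K M] [IsScalarTower K K[X] M] in
lemma X_smul_mem {m : ℤ} {a : M} (ha : a ∈ g m) : (X : K[X]) • a ∈ g (m + 1) := by
  rw [← algebraMap_smul Λ (X : K[X]) a, add_comm]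
  exact hg.2 _ _ _ lambdaDeg_X _ ha

lemma scalar_smul_mem {m : ℤ} {a : M} (c : K) (ha : a ∈ g m) : c • a ∈ g m := by
  rw [← C_smul_eq c a, ← algebraMap_smul Λ (C c : K[X]) a]
  simpa using hg.2 _ _ _ (lambdaDeg_C c) _ ha

/-- The image in the fibre of the degree `m` part of the `l`-th component. -/
def fiberFilt (l : Fin n) (m : ℤ) : Submodule K (Fiber hn hΛ M) where
  carrier := {v | ∃ a ∈ g m, fiberMap hn hΛ l a = v}
  add_mem' := by
    rintro _ _ ⟨a, ha, rfl⟩ ⟨b, hb, rfl⟩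
    exact ⟨a + b, add_mem ha hb, map_add _ _ _⟩
  zero_mem' := ⟨0, zero_mem _, map_zero _⟩
  smul_mem' := by
    rintro c _ ⟨a, ha, rfl⟩
    exact ⟨c • a, scalar_smul_mem hg c ha, map_smul _ _ _⟩

lemma mem_fiberFilt {l : Fin n} {m : ℤ} {v : Fiber hn hΛ M} :
    v ∈ fiberFilt hn hΛ hg l m ↔ ∃ a ∈ g m, fiberMap hn hΛ l a = v := Iff.rfl

lemma fiberFilt_mono {i j : Fin n} {m s : ℤ} (h : m + cExp n i j ≤ s) :
    fiberFilt hn hΛ hg j m ≤ fiberFilt hn hΛ hg i s := by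
  rintro _ ⟨a, ha, rfl⟩
  have hc : cExp n i j ≤ s - m := by omega
  exact ⟨matUnit hΛ i j (s - m) hc • a, matUnit_smul_mem hΛ hg hc ha (by omega),
    fiberMap_matUnit_smul hn hΛ hc a⟩

lemma exists_mem_fiberFilt (v : Fiber hn hΛ M) :
    ∃ m, v ∈ fiberFilt hn hΛ hg (firstIdx hn) m := by
  obtain ⟨a, rfl⟩ := (fiberRel hn hΛ M).mkQ_surjective v
  refine homog_induction hg.1
    (p := fun a => ∃ m, (fiberRel hn hΛ M).mkQ a ∈ fiberFilt hn hΛ hg (firstIdx hn) m) a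
    ⟨0, by rw [map_zero]; exact zero_mem _⟩ (fun m a ha => ⟨m, a, ha, fiberMap_first hn hΛ a⟩) ?_
  rintro a b ⟨m, hm⟩ ⟨m', hm'⟩
  have h := cExp_firstIdx_nonpos hn (firstIdx hn)
  refine ⟨max m m', ?_⟩
  rw [map_add]
  exact add_mem (fiberFilt_mono hn hΛ hg (by omega) hm) (fiberFilt_mono hn hΛ hg (by omega) hm')

omit [Module K M] [IsScalarTower K K[X] M] in
lemma homogPart_X_smul (j : ℤ) (a : M) :
    homogPart hg.1 (j + 1) ((X : K[X]) • a) = (X : K[X]) • homogPart hg.1 j a := by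
  refine homog_induction hg.1 (p := fun a => homogPart hg.1 (j + 1) ((X : K[X]) • a) =
    (X : K[X]) • homogPart hg.1 j a) a (by simp) (fun m a ha => ?_) ?_
  · rcases eq_or_ne j m with rfl | hj
    · rw [homogPart_same hg.1 ha, homogPart_same hg.1 (X_smul_mem hg ha)]
    · rw [homogPart_of_ne hg.1 ha hj, homogPart_of_ne hg.1 (X_smul_mem hg ha) (by omega),
        smul_zero]
  · intro a b ha hb
    rw [smul_add, map_add, ha, hb, map_add, smul_add]

omit [Module K M] [IsScalarTower K K[X] M] in
/-- Over a torsion-free graded module, `x - 1` has no homogeneous elements in its image. -/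
lemma eq_zero_of_X_smul_sub (hX : ∀ a : M, (X : K[X]) • a = 0 → a = 0) {m : ℤ} {b c : M}
    (hb : b ∈ g m) (h : (X : K[X]) • c - c = b) : b = 0 := by
  obtain ⟨N, hN⟩ := exists_bound_homogPart hg.1 c
  have hstep : ∀ j, j + 1 ≠ m →
      (X : K[X]) • homogPart hg.1 j c = homogPart hg.1 (j + 1) c := by
    intro j hj
    have := congrArg (homogPart hg.1 (j + 1)) h
    rw [map_sub, homogPart_X_smul hg, homogPart_of_ne hg.1 hb hj] at this
    exact sub_eq_zero.1 this
  have hlow : ∀ k : ℕ, ∀ j : ℤ, j < m → j < k - N → homogPart hg.1 j c = 0 := by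
    intro k
    induction k with
    | zero =>
      intro j _ hj
      exact hN j (by push_cast at hj; rw [abs_of_nonpos (by omega)]; omega)
    | succ k ih =>
      intro j hj hk
      have := hstep (j - 1) (by omega)
      rw [ih (j - 1) (by omega) (by push_cast at hk; omega), smul_zero, sub_add_cancel] at this
      exact this.symm
  have hhigh : ∀ k : ℕ, ∀ j : ℤ, m ≤ j → N - k < j → homogPart hg.1 j c = 0 := by
    intro k
    induction k with
    | zero =>
      intro j _ hj
      exact hN j (by push_cast at hj; rw [abs_of_nonneg (by omega)]; omega)
    | succ k ih =>
      intro j hj hk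
      have := hstep j (by omega)
      rw [ih (j + 1) (by omega) (by push_cast at hk; omega)] at this
      exact hX _ this
  have hc : c = 0 := by
    refine eq_zero_of_homogPart hg.1 fun j => ?_
    rcases lt_or_ge j m with hj | hj
    · exact hlow (j + N + 1).toNat j hj (by omega)
    · exact hhigh (N + 1 - j).toNat j hj (by omega)
  rw [← h, hc, smul_zero, sub_zero]

lemma diagUnit_smul_eq_zero (hX : ∀ a : M, (X : K[X]) • a = 0 → a = 0) {m : ℤ} {l : Fin n}
    {a : M} (ha : a ∈ g m) (h : fiberMap hn hΛ l a = 0) : diagUnit hΛ l • a = 0 := by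
  rw [fiberMap_apply, Submodule.mkQ_apply, Submodule.Quotient.mk_eq_zero, mem_fiberRel] at h
  obtain ⟨b, hb⟩ := h
  rw [smul_smul (rowUnit hn hΛ _), rowUnit_first_mul] at hb
  have h0 := eq_zero_of_X_smul_sub hg hX (matUnit_smul_mem hΛ hg
    (cExp_firstIdx_nonpos hn l) ha (add_zero m)) hb
  have h1 : matUnit hΛ l (firstIdx hn) 2 (cExp_le_two _ _) • rowUnit hn hΛ l • a = 0 := by
    rw [rowUnit, h0, smul_zero]
  rw [smul_smul, rowUnit, matUnit_mul hΛ _ _ (cExp_le_two l l) (by simp),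
    ← pow_smul_matUnit hΛ 2 (cExp_diag_nonpos l) _ (by simp), smul_assoc, pow_two,
    mul_smul] at h1
  exact hX _ (hX _ h1)

lemma eq_zero_of_fiberMap (hX : ∀ a : M, (X : K[X]) • a = 0 → a = 0) {m : ℤ}
    {a : M} (ha : a ∈ g m) (h : ∀ l, fiberMap hn hΛ l a = 0) : a = 0 := by
  rw [← sum_diagUnit_smul hΛ a]
  exact Finset.sum_eq_zero fun l _ => diagUnit_smul_eq_zero hn hΛ hg hX ha (h l)

end Graded
end Module
end Fiber

section Functional

variable {K : Type} [Field K]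

open scoped RatFunc in
/-- The expansion of a rational function as a Laurent series at `0`. -/
def laurentExp : RatFunc K →+* LaurentSeries K := algebraMap (RatFunc K) (LaurentSeries K)

lemma laurentExp_X : laurentExp (RatFunc.X : RatFunc K) = HahnSeries.single 1 1 := RatFunc.coe_X

lemma laurentExp_algebraMap (c : K) :
    laurentExp (algebraMap K (RatFunc K) c) = HahnSeries.C c := by
  rw [← PowerSeries.coe_C, ← Polynomial.coe_C, RatFunc.coe_coe, RatFunc.algebraMap_eq_C]
  exact congrArg laurentExp (RatFunc.algebraMap_C c).symm

lemma coeff_C_mul_zpow (c : K) (m j : ℤ) :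
    (laurentExp
      (algebraMap K (RatFunc K) c * RatFunc.X ^ m)).coeff j = if j = m then c else 0 := by
  rw [map_mul, map_zpow₀, laurentExp_X, ← RatFunc.single_zpow, laurentExp_algebraMap, HahnSeries.C_apply,
    HahnSeries.single_mul_single, HahnSeries.coeff_single]
  simp

lemma coeff_of_mem_homogSet {m j : ℤ} {f : RatFunc K} (hf : f ∈ homogSet K m) (h : j ≠ m) :
    (laurentExp f).coeff j = 0 := by
  obtain ⟨c, rfl⟩ := hf
  rw [coeff_C_mul_zpow, if_neg h]

variable {n : ℕ} (hn : 3 ≤ n)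
variable {Λ : Subalgebra K[X] (Matrix (Fin n) (Fin n) (RatFunc K))}
variable (hΛ : (Λ : Set (Matrix (Fin n) (Fin n) (RatFunc K))) = lambdaCarrier K n)
variable {M : Type*} [AddCommGroup M] [Module Λ M] [Module K[X] M] [IsScalarTower K[X] Λ M]
  [Module K M] [IsScalarTower K K[X] M]
variable {g : ℤ → AddSubgroup M} (hg : IsModGrading Λ M g)
variable (φ : Fiber hn hΛ M →ₗ[K] K) (σ : ℤ)

/-- The map to `K(x)` which sends `a` of degree `m` to `φ(a) x^(σ+m)`. -/
def expandAt : M →+ RatFunc K :=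
  homogLift hg.1 fun m => AddMonoidHom.mk'
    (fun a => algebraMap K (RatFunc K) (φ ((fiberRel hn hΛ M).mkQ a)) * RatFunc.X ^ (σ + m))
    fun a b => by rw [map_add, map_add, map_add, add_mul]

lemma expandAt_of_mem {m : ℤ} {a : M} (ha : a ∈ g m) :
    expandAt hn hΛ hg φ σ a =
      algebraMap K (RatFunc K) (φ ((fiberRel hn hΛ M).mkQ a)) * RatFunc.X ^ (σ + m) :=
  homogLift_of_mem hg.1 _ ha

lemma expandAt_X_smul (a : M) :
    expandAt hn hΛ hg φ σ ((X : K[X]) • a) = RatFunc.X * expandAt hn hΛ hg φ σ a := by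
  refine homog_induction hg.1 (p := fun a => expandAt hn hΛ hg φ σ ((X : K[X]) • a) =
    RatFunc.X * expandAt hn hΛ hg φ σ a) a (by simp) (fun m a ha => ?_) ?_
  · rw [expandAt_of_mem hn hΛ hg φ σ ha, expandAt_of_mem hn hΛ hg φ σ (X_smul_mem hg ha),
      mkQ_X_smul, ← add_assoc, zpow_add₀ RatFunc.X_ne_zero, zpow_one]
    ring
  · intro a b ha hb
    rw [smul_add, map_add, ha, hb, map_add, mul_add]

lemma expandAt_scalar_smul (c : K) (a : M) :
    expandAt hn hΛ hg φ σ (c • a) = algebraMap K (RatFunc K) c * expandAt hn hΛ hg φ σ a := by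
  refine homog_induction hg.1 (p := fun a => expandAt hn hΛ hg φ σ (c • a) =
    algebraMap K (RatFunc K) c * expandAt hn hΛ hg φ σ a) a (by simp) (fun m a ha => ?_) ?_
  · rw [expandAt_of_mem hn hΛ hg φ σ ha, expandAt_of_mem hn hΛ hg φ σ (scalar_smul_mem hg c ha),
      map_smul, map_smul, smul_eq_mul, map_mul, mul_assoc]
  · intro a b ha hb
    rw [smul_add, map_add, ha, hb, map_add, mul_add]

lemma expandAt_smul (p : K[X]) (a : M) :
    expandAt hn hΛ hg φ σ (p • a) =
      algebraMap K[X] (RatFunc K) p * expandAt hn hΛ hg φ σ a := by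
  induction p using Polynomial.induction_on' with
  | add p q hp hq => rw [add_smul, map_add, hp, hq, map_add, add_mul]
  | monomial k c =>
    induction k with
    | zero =>
      rw [Polynomial.monomial_zero_left, C_smul_eq, expandAt_scalar_smul]
      simp [RatFunc.algebraMap_eq_C]
    | succ k ih =>
      rw [← Polynomial.X_mul_monomial, mul_smul, expandAt_X_smul, ih, map_mul,
        RatFunc.algebraMap_X, mul_assoc]

lemma coeff_expandAt (a : M) (j : ℤ) :
    (laurentExp (expandAt hn hΛ hg φ σ a)).coeff (σ + j) =
      φ ((fiberRel hn hΛ M).mkQ (homogPart hg.1 j a)) := by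
  refine homog_induction hg.1 (p := fun a =>
    (laurentExp (expandAt hn hΛ hg φ σ a)).coeff (σ + j) =
      φ ((fiberRel hn hΛ M).mkQ (homogPart hg.1 j a))) a (by simp) (fun m a ha => ?_) ?_
  · rw [expandAt_of_mem hn hΛ hg φ σ ha, coeff_C_mul_zpow]
    rcases eq_or_ne j m with rfl | hj
    · rw [homogPart_same hg.1 ha, if_pos rfl]
    · rw [homogPart_of_ne hg.1 ha hj, if_neg (by omega), map_zero, map_zero]
  · intro a b ha hb
    rw [map_add, map_add, HahnSeries.coeff_add, ha, hb, map_add, map_add, map_add]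

/-- The `Λ`-linear map to `K(x)^n` determined by a functional on the fibre. -/
def expandVec : M →ₗ[Λ] (Fin n → RatFunc K) where
  toFun a l := expandAt hn hΛ hg φ σ (rowUnit hn hΛ l • a)
  map_add' a b := by
    ext l
    simp [smul_add]
  map_smul' u a := by
    ext i
    obtain ⟨p, hp, hp'⟩ := matUnit_mul_eq_sum hΛ (firstIdx hn) (cExp_firstIdx_nonpos hn) i u
    apply mul_left_cancel₀ (RatFunc.X_ne_zero (K := K))
    change _ = RatFunc.X * ∑ l, (u : Matrix (Fin n) (Fin n) (RatFunc K)) i l *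
      expandAt hn hΛ hg φ σ (rowUnit hn hΛ l • a)
    rw [← expandAt_X_smul, smul_smul, ← smul_assoc, rowUnit, hp, Finset.sum_smul, map_sum,
      Finset.mul_sum]
    refine Finset.sum_congr rfl fun l _ => ?_
    rw [smul_assoc, expandAt_smul, hp', mul_assoc]
    rfl

lemma expandVec_apply (a : M) (l : Fin n) :
    expandVec hn hΛ hg φ σ a l = expandAt hn hΛ hg φ σ (rowUnit hn hΛ l • a) := rfl

lemma expandVec_of_mem {m : ℤ} {a : M} (ha : a ∈ g m) (l : Fin n) :
    expandVec hn hΛ hg φ σ a l =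
      algebraMap K (RatFunc K) (φ (fiberMap hn hΛ l a)) * RatFunc.X ^ (σ + m) :=
  expandAt_of_mem hn hΛ hg φ σ (matUnit_smul_mem hΛ hg _ ha (add_zero m))

lemma expandVec_smul (p : K[X]) (a : M) (l : Fin n) :
    expandVec hn hΛ hg φ σ (p • a) l =
      algebraMap K[X] (RatFunc K) p * expandVec hn hΛ hg φ σ a l := by
  rw [expandVec_apply, smul_comm, expandAt_smul, expandVec_apply]

lemma expandVec_mem_homogGroup {m : ℤ} {a : M} (ha : a ∈ g m) :
    expandVec hn hΛ hg φ σ a ∈ homogGroup K n (σ + m) :=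
  fun l => ⟨_, expandVec_of_mem hn hΛ hg φ σ ha l⟩

omit [Module K[X] M] [IsScalarTower K[X] Λ M] [Module K M] [IsScalarTower K K[X] M] in
include hg in
lemma homogPart_rowUnit_smul (l : Fin n) (a : M) (j : ℤ) :
    homogPart hg.1 j (rowUnit hn hΛ l • a) = rowUnit hn hΛ l • homogPart hg.1 j a := by
  refine homog_induction hg.1 (p := fun a => homogPart hg.1 j (rowUnit hn hΛ l • a) =
    rowUnit hn hΛ l • homogPart hg.1 j a) a (by simp) (fun m a ha => ?_) ?_
  · have h := matUnit_smul_mem hΛ hg (cExp_firstIdx_nonpos hn l) ha (add_zero m)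
    rcases eq_or_ne j m with rfl | hj
    · rw [homogPart_same hg.1 ha]
      exact homogPart_same hg.1 h
    · rw [homogPart_of_ne hg.1 ha hj, smul_zero]
      exact homogPart_of_ne hg.1 h hj
  · intro a b ha hb
    rw [smul_add, map_add, ha, hb, map_add, smul_add]

lemma coeff_expandVec (a : M) (l : Fin n) (j : ℤ) :
    (laurentExp (expandVec hn hΛ hg φ σ a l)).coeff (σ + j) =
      φ (fiberMap hn hΛ l (homogPart hg.1 j a)) := by
  rw [expandVec_apply, coeff_expandAt, homogPart_rowUnit_smul hn hΛ hg]
  rfl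

lemma apply_fiberMap_of_homog {m : ℤ} {a : M}
    (h : expandVec hn hΛ hg φ σ a ∈ homogGroup K n (σ + m)) {j : ℤ} (hj : j ≠ m) (l : Fin n) :
    φ (fiberMap hn hΛ l (homogPart hg.1 j a)) = 0 := by
  rw [← coeff_expandVec hn hΛ hg φ σ]
  exact coeff_of_mem_homogSet (h l) (by omega)

lemma apply_fiberMap_of_eq_zero {a : M} (h : expandVec hn hΛ hg φ σ a = 0) (j : ℤ)
    (l : Fin n) : φ (fiberMap hn hΛ l (homogPart hg.1 j a)) = 0 := by
  rw [← coeff_expandVec hn hΛ hg φ σ, h]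
  simp

lemma expandVec_diagUnit_smul (a : M) (l : Fin n) :
    expandVec hn hΛ hg φ σ (diagUnit hΛ l • a) l = expandVec hn hΛ hg φ σ a l := by
  rw [expandVec_apply, smul_smul, rowUnit_mul_diagUnit, expandVec_apply]

lemma expandVec_diagUnit_smul_of_ne (a : M) {i l : Fin n} (h : i ≠ l) :
    expandVec hn hΛ hg φ σ (diagUnit hΛ l • a) i = 0 := by
  rw [expandVec_apply, smul_smul, rowUnit_mul_diagUnit_of_ne hn hΛ h, zero_smul, map_zero]

lemma expandVec_diagUnit_eq_zero {m : ℤ} {a : M} (ha : a ∈ g m) {l : Fin n}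
    (h : φ (fiberMap hn hΛ l a) = 0) : expandVec hn hΛ hg φ σ (diagUnit hΛ l • a) = 0 := by
  ext i
  rcases eq_or_ne i l with rfl | hi
  · rw [expandVec_diagUnit_smul, expandVec_of_mem hn hΛ hg φ σ ha, h]
    simp
  · exact expandVec_diagUnit_smul_of_ne hn hΛ hg φ σ a hi

/-- A functional vanishing outside an up-set defines a map into the corresponding lattice. -/
lemma expandVec_mem_ijSet {i j : ℕ}
    (h : ∀ (l : Fin n) (m : ℤ), σ + m < dExp i j l →
      ∀ v ∈ fiberFilt hn hΛ hg l m, φ v = 0) (a : M) :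
    expandVec hn hΛ hg φ σ a ∈ ijSet K n i j := by
  intro l
  refine homog_induction hg.1 (p := fun a => expandVec hn hΛ hg φ σ a l ∈ xPow K (dExp i j l)) a
    ?_ (fun m a ha => ?_) ?_
  · rw [map_zero]
    exact zero_mem_xPow _
  · rw [expandVec_of_mem hn hΛ hg φ σ ha]
    by_cases hm : σ + m < dExp i j l
    · rw [h l m hm _ ⟨a, ha, rfl⟩, map_zero, zero_mul]
      exact zero_mem_xPow _
    · obtain ⟨p, hp⟩ := zpow_mem_xPow (K := K) (not_lt.1 hm)
      refine ⟨C (φ (fiberMap hn hΛ l a)) * p, ?_⟩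
      rw [hp, map_mul, RatFunc.algebraMap_C, RatFunc.algebraMap_eq_C]
      ring
  · intro a b ha hb
    rw [map_add]
    exact add_mem_xPow ha hb

/-- A vector lying in an up-set of the filtrations hits every element of the corresponding
lattice, and only those functionals not vanishing on the vector see the preimage. -/
lemma exists_expandVec_eq {i j : ℕ} {v : Fiber hn hΛ M}
    (hv : ∀ (l : Fin n) (m : ℤ), dExp i j l ≤ σ + m → v ∈ fiberFilt hn hΛ hg l m)
    (hφ : φ v = 1) {w : Fin n → RatFunc K} (hw : w ∈ ijSet K n i j) :
    ∃ a, expandVec hn hΛ hg φ σ a = w ∧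
      ∀ φ' : Fiber hn hΛ M →ₗ[K] K, ∀ σ', φ' v = 0 → expandVec hn hΛ hg φ' σ' a = 0 := by
  choose p hp using hw
  choose b hb hbv using fun l : Fin n => hv l (dExp i j l - σ) (by omega)
  refine ⟨∑ l, p l • diagUnit hΛ l • b l, ?_, fun φ' σ' h' => ?_⟩
  · ext k
    rw [map_sum, Finset.sum_apply, Finset.sum_eq_single k]
    · rw [expandVec_smul, expandVec_diagUnit_smul, expandVec_of_mem hn hΛ hg φ σ (hb k), hbv,
        hφ, map_one, one_mul, hp, mul_comm]
      congr 2
      omega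
    · intro l _ hl
      rw [expandVec_smul, expandVec_diagUnit_smul_of_ne hn hΛ hg φ σ _ hl.symm, mul_zero]
    · simp
  · rw [map_sum]
    refine Finset.sum_eq_zero fun l _ => ?_
    ext k
    rw [expandVec_smul, expandVec_diagUnit_eq_zero hn hΛ hg φ' σ' (hb l) (by rw [hbv, h'])]
    simp

end Functional

section Chains

lemma ediv_emod_succ {n : ℤ} (hn : 0 < n) (x : ℤ) :
    (x % n + 1 < n ∧ (x + 1) / n = x / n ∧ (x + 1) % n = x % n + 1) ∨
      (x % n + 1 = n ∧ (x + 1) / n = x / n + 1 ∧ (x + 1) % n = 0) := by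
  have h0 := Int.emod_nonneg x hn.ne'
  have h1 := Int.emod_lt_of_pos x hn
  have h2 := Int.emod_add_mul_ediv x n
  rcases lt_or_ge (x % n + 1) n with h | h
  · exact Or.inl ⟨h, (Int.ediv_emod_unique hn).2 ⟨by linarith, by omega, h⟩⟩
  · exact Or.inr ⟨by omega,
      (Int.ediv_emod_unique hn).2 ⟨by rw [mul_add]; omega, le_rfl, hn⟩⟩

lemma mul_add_le_mul_add_iff {n a b r s : ℤ} (hr : 0 ≤ r) (hrn : r < n) (hs : 0 ≤ s)
    (hsn : s < n) : n * a + r ≤ n * b + s ↔ a < b ∨ (a = b ∧ r ≤ s) := by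
  rcases lt_trichotomy a b with h | rfl | h
  · have : n * a + n ≤ n * b := by nlinarith
    constructor <;> intro <;> [left; skip] <;> omega
  · constructor <;> intro <;> omega
  · have : n * b + n ≤ n * a := by nlinarith
    constructor <;> intro <;> omega

/-- The row in which the `p`-th term of the two chains of filtration steps lives. -/
def rowOf {n : ℕ} (hn : 3 ≤ n) (p : ℤ) : Fin n :=
  ⟨((p - 1) % n).toNat, by
    have h0 := Int.emod_nonneg (p - 1) (b := n) (by omega)
    have h1 := Int.emod_lt_of_pos (p - 1) (b := n) (by omega)
    omega⟩

/-- The degree in which the `p`-th term of the even chain lives. -/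
def degOf (n : ℕ) (p : ℤ) : ℤ := -2 * ((p - 1) / n)

lemma exists_rowOf_eq {n : ℕ} (hn : 3 ≤ n) (l : Fin n) (m : ℤ) :
    ∃ p, rowOf hn p = l ∧ (degOf n p = m ∨ degOf n p + 1 = m) := by
  have h := (Int.ediv_emod_unique (a := (l : ℤ) + n * (-(m / 2))) (b := n) (r := l)
    (q := -(m / 2)) (by omega)).2 ⟨rfl, by omega, by omega⟩
  refine ⟨(l : ℤ) + n * (-(m / 2)) + 1, ?_, ?_⟩
  · apply Fin.ext
    simp only [rowOf, add_sub_cancel_right, h.2, Int.toNat_natCast]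
  · simp only [degOf, add_sub_cancel_right, h.1]
    omega

lemma rowOf_degOf_step {n : ℕ} (hn : 3 ≤ n) (p : ℤ) :
    degOf n (p + 1) + cExp n (rowOf hn p) (rowOf hn (p + 1)) ≤ degOf n p ∧
    degOf n p + cExp n (rowOf hn (p + 1)) (rowOf hn p) ≤ degOf n (p + 1) + 1 ∧
    degOf n p + 1 + cExp n (rowOf hn (p - n + 1)) (rowOf hn p) ≤ degOf n (p - n + 1) := by
  have h0 := Int.emod_nonneg (p - 1) (b := n) (by omega)
  have h1 := Int.emod_lt_of_pos (p - 1) (b := n) (by omega)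
  have h2 : (p - n + 1 - 1) / (n : ℤ) = (p - 1 + 1) / n - 1 := by
    rw [show p - n + 1 - 1 = p - 1 + 1 - n by ring, Int.sub_ediv_of_dvd _ (dvd_refl _),
      Int.ediv_self (by omega)]
  have h3 : (p - n + 1 - 1) % (n : ℤ) = (p - 1 + 1) % n := by
    rw [show p - n + 1 - 1 = p - 1 + 1 - n by ring, Int.sub_emod_right]
  have h4 : p + 1 - 1 = p - 1 + 1 := by ring
  unfold degOf cExp rowOf
  simp only [h2, h3, h4]
  rcases ediv_emod_succ (n := n) (by omega) (p - 1) with ⟨h, h', h''⟩ | ⟨h, h', h''⟩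
  all_goals
    rw [h', h'']
    generalize (p - 1) / (n : ℤ) = a at *
    generalize (p - 1) % (n : ℤ) = r at *
    clear h2 h3 h4 h' h''
    refine ⟨?_, ?_, ?_⟩ <;> split_ifs <;> omega

lemma baseIdx_spec {n : ℕ} (hn : 3 ≤ n) {s t : ℤ} (hst : s < t) (hts : t < s + n) :
    1 ≤ (baseIdx n s t).1 ∧ (baseIdx n s t).1 < (baseIdx n s t).2.1 ∧
    (baseIdx n s t).2.1 ≤ n ∧
    ∀ p, (dExp (baseIdx n s t).1 (baseIdx n s t).2.1 (rowOf hn p) ≤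
        (baseIdx n s t).2.2 + degOf n p ↔ p ≤ s) ∧
      (dExp (baseIdx n s t).1 (baseIdx n s t).2.1 (rowOf hn p) ≤
        (baseIdx n s t).2.2 + (degOf n p + 1) ↔ p ≤ t) := by
  have hs0 := Int.emod_nonneg (s - 1) (b := n) (by omega)
  have hs1 := Int.emod_lt_of_pos (s - 1) (b := n) (by omega)
  have hs2 := Int.mul_ediv_add_emod (s - 1) n
  have ht0 := Int.emod_nonneg (t - 1) (b := n) (by omega)
  have ht1 := Int.emod_lt_of_pos (t - 1) (b := n) (by omega)
  have ht2 := Int.mul_ediv_add_emod (t - 1) n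
  have hσ : (s - ((s - 1) % n + 1)) / (n : ℤ) = (s - 1) / n := by
    rw [show s - ((s - 1) % n + 1) = n * ((s - 1) / n) by omega,
      Int.mul_ediv_cancel_left _ (by omega)]
  have hst' := (not_congr (mul_add_le_mul_add_iff ht0 ht1 hs0 hs1
    (a := (t - 1) / n) (b := (s - 1) / n))).1 (by omega)
  have hts' := (not_congr (mul_add_le_mul_add_iff (a := (s - 1) / n + 1) (b := (t - 1) / n)
    hs0 hs1 ht0 ht1)).1 (by rw [mul_add]; omega)
  unfold baseIdx rres degOf dExp rowOf
  simp only [hσ]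
  have key : ∀ p x : ℤ, 0 ≤ (x - 1) % (n : ℤ) → (x - 1) % (n : ℤ) < n → (p ≤ x ↔
      (p - 1) / (n : ℤ) < (x - 1) / n ∨
        ((p - 1) / (n : ℤ) = (x - 1) / n ∧ (p - 1) % (n : ℤ) ≤ (x - 1) % n)) := by
    intro p x hx hx'
    rw [← mul_add_le_mul_add_iff (n := n) (Int.emod_nonneg _ (by omega))
      (Int.emod_lt_of_pos _ (by omega)) hx hx', Int.mul_ediv_add_emod, Int.mul_ediv_add_emod]
    omega
  have hp : ∀ p : ℤ, 0 ≤ (p - 1) % (n : ℤ) := fun p => Int.emod_nonneg _ (by omega)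
  split_ifs with hlt
  all_goals
    refine ⟨by simp only; omega, by simp only; omega, by simp only; omega, fun p => ?_⟩
    have hp0 := hp p
    rw [key p s hs0 hs1, key p t ht0 ht1]
    simp only
    clear key hp hσ hs2 ht2
    generalize (p - 1) / (n : ℤ) = a at *
    generalize (p - 1) % (n : ℤ) = r at *
    generalize (s - 1) / (n : ℤ) = a' at *
    generalize (s - 1) % (n : ℤ) = r' at *
    generalize (t - 1) / (n : ℤ) = a'' at *
    generalize (t - 1) % (n : ℤ) = r'' at *
    constructor <;> split_ifs <;> omega

end Chains

section ChainFilt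

variable {K : Type} [Field K] {n : ℕ} (hn : 3 ≤ n)
variable {Λ : Subalgebra K[X] (Matrix (Fin n) (Fin n) (RatFunc K))}
variable (hΛ : (Λ : Set (Matrix (Fin n) (Fin n) (RatFunc K))) = lambdaCarrier K n)
variable {M : Type*} [AddCommGroup M] [Module Λ M] [Module K[X] M] [IsScalarTower K[X] Λ M]
  [Module K M] [IsScalarTower K K[X] M]
variable {g : ℤ → AddSubgroup M} (hg : IsModGrading Λ M g)

/-- The even chain of filtration steps of the fibre. -/
def evenFilt (p : ℤ) : Submodule K (Fiber hn hΛ M) :=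
  fiberFilt hn hΛ hg (rowOf hn p) (degOf n p)

/-- The odd chain of filtration steps of the fibre. -/
def oddFilt (p : ℤ) : Submodule K (Fiber hn hΛ M) :=
  fiberFilt hn hΛ hg (rowOf hn p) (degOf n p + 1)

lemma fiberFilt_eq (l : Fin n) (m : ℤ) : ∃ p,
    fiberFilt hn hΛ hg l m = evenFilt hn hΛ hg p ∨ fiberFilt hn hΛ hg l m = oddFilt hn hΛ hg p := by
  obtain ⟨p, rfl, rfl | rfl⟩ := exists_rowOf_eq hn l m
  exacts [⟨p, Or.inl rfl⟩, ⟨p, Or.inr rfl⟩]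

lemma evenFilt_antitone : Antitone (evenFilt hn hΛ hg) :=
  antitone_int_of_succ_le fun p => fiberFilt_mono hn hΛ hg (rowOf_degOf_step hn p).1

lemma oddFilt_antitone : Antitone (oddFilt hn hΛ hg) :=
  antitone_int_of_succ_le fun p => fiberFilt_mono hn hΛ hg
    (by linarith [(rowOf_degOf_step hn p).1])

lemma evenFilt_le_oddFilt (p : ℤ) : evenFilt hn hΛ hg p ≤ oddFilt hn hΛ hg (p + 1) :=
  fiberFilt_mono hn hΛ hg (rowOf_degOf_step hn p).2.1

lemma oddFilt_le_evenFilt (p : ℤ) : oddFilt hn hΛ hg p ≤ evenFilt hn hΛ hg (p - n + 1) :=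
  fiberFilt_mono hn hΛ hg (rowOf_degOf_step hn p).2.2

lemma exists_mem_evenFilt (v : Fiber hn hΛ M) : ∃ p, v ∈ evenFilt hn hΛ hg p := by
  obtain ⟨m, hm⟩ := exists_mem_fiberFilt hn hΛ hg v
  obtain ⟨p, hp | hp⟩ := fiberFilt_eq hn hΛ hg (firstIdx hn) m
  · exact ⟨p, hp ▸ hm⟩
  · exact ⟨_, oddFilt_le_evenFilt hn hΛ hg p (hp ▸ hm)⟩

include hg in
lemma homogPart_scalar_smul (c : K) (j : ℤ) (a : M) :
    homogPart hg.1 j (c • a) = c • homogPart hg.1 j a := by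
  refine homog_induction hg.1 (p := fun a => homogPart hg.1 j (c • a) =
    c • homogPart hg.1 j a) a (by simp) (fun m a ha => ?_) ?_
  · rcases eq_or_ne j m with rfl | hj
    · rw [homogPart_same hg.1 ha, homogPart_same hg.1 (scalar_smul_mem hg c ha)]
    · rw [homogPart_of_ne hg.1 ha hj, homogPart_of_ne hg.1 (scalar_smul_mem hg c ha) hj,
        smul_zero]
  · intro a b ha hb
    rw [smul_add, map_add, ha, hb, map_add, smul_add]

include hg in
/-- The degrees of a finitely generated graded module are bounded below. -/
lemma exists_lower_bound (hfin : Module.Finite K[X] M) : ∃ m₀, ∀ m < m₀, ∀ a ∈ g m, a = 0 := by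
  obtain ⟨S, hS⟩ := hfin.fg_top
  choose N hN using exists_bound_homogPart hg.1
  refine ⟨-(S.sup N : ℕ), fun m hm a ha => ?_⟩
  have : ∀ a : M, ∀ m < -((S.sup N : ℕ) : ℤ), homogPart hg.1 m a = 0 := by
    intro a
    have ha : a ∈ Submodule.span K[X] (S : Set M) := by rw [hS]; trivial
    induction ha using Submodule.span_induction with
    | mem x hx =>
      intro m hm
      have := Finset.le_sup (f := N) hx
      exact hN x m (by rw [abs_of_nonpos (by omega)]; omega)
    | zero => simp
    | add x y _ _ hx hy =>
      intro m hm
      rw [map_add, hx m hm, hy m hm, add_zero]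
    | smul p x _ hx =>
      induction p using Polynomial.induction_on with
      | C c =>
        intro m hm
        rw [C_smul_eq, homogPart_scalar_smul hg, hx m hm, smul_zero]
      | add p q hp hq =>
        intro m hm
        rw [add_smul, map_add, hp m hm, hq m hm, add_zero]
      | monomial k c ih =>
        intro m hm
        rw [pow_succ', mul_left_comm, mul_smul, ← sub_add_cancel m 1, homogPart_X_smul hg,
          ih (m - 1) (by omega), smul_zero]
  rw [← homogPart_same hg.1 ha, this a m hm]

lemma evenFilt_eq_bot {m₀ : ℤ} (h : ∀ m < m₀, ∀ a ∈ g m, a = 0) :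
    ∃ p₀, ∀ p, p₀ < p → evenFilt hn hΛ hg p = ⊥ := by
  refine ⟨n * (|m₀| + 1), fun p hp => ?_⟩
  rw [eq_bot_iff]
  rintro _ ⟨a, ha, rfl⟩
  have h1 : |m₀| + 1 ≤ (p - 1) / (n : ℤ) := by
    rw [Int.le_ediv_iff_mul_le (by omega), mul_comm]
    omega
  have h2 := neg_abs_le m₀
  have h3 := abs_nonneg m₀
  rw [h _ (by unfold degOf; omega) a ha, map_zero]
  exact zero_mem _

end ChainFilt

section Structure

variable {K : Type} [Field K] {n : ℕ} (hn : 3 ≤ n)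
variable {Λ : Subalgebra K[X] (Matrix (Fin n) (Fin n) (RatFunc K))}
variable (hΛ : (Λ : Set (Matrix (Fin n) (Fin n) (RatFunc K))) = lambdaCarrier K n)
variable {M : Type*} [AddCommGroup M] [Module Λ M]
variable {g : ℤ → AddSubgroup M} (hg : IsModGrading Λ M g)

include hg in
lemma mem_of_forall_homogPart_mem {a : M} {A : Submodule Λ M}
    (h : ∀ j, homogPart hg.1 j a ∈ A) : a ∈ A := by
  obtain ⟨s, hs⟩ : ∃ s : Finset ℤ, ∀ s', s ⊆ s' → ∑ j ∈ s', homogPart hg.1 j a = a := by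
    refine homog_induction hg.1 (p := fun a => ∃ s : Finset ℤ, ∀ s', s ⊆ s' →
      ∑ j ∈ s', homogPart hg.1 j a = a) a ⟨∅, by simp⟩ (fun m a ha => ⟨{m}, fun s' hs' => ?_⟩) ?_
    · rw [Finset.sum_eq_single_of_mem m (by simpa using hs')
        (fun j _ hj => homogPart_of_ne hg.1 ha hj), homogPart_same hg.1 ha]
    · rintro a b ⟨s, hs⟩ ⟨s', hs'⟩
      refine ⟨s ∪ s', fun S hS => ?_⟩
      simp only [map_add, Finset.sum_add_distrib]
      rw [hs S (Finset.union_subset_left hS), hs' S (Finset.union_subset_right hS)]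
  rw [← hs s subset_rfl]
  exact sum_mem fun j _ => h j

include hg in
lemma isGradedSubmodule_of_homogPart_mem {A : Submodule Λ M}
    (h : ∀ a ∈ A, ∀ j, homogPart hg.1 j a ∈ A) : IsGradedSubmodule Λ g A := fun a ha =>
  mem_of_forall_homogPart_mem hg fun j => Submodule.subset_span
    ⟨h a ha j, Set.mem_iUnion_of_mem j (homogPart_mem hg.1 j a)⟩

variable [Module K[X] M] [IsScalarTower K[X] Λ M] [Module K M] [IsScalarTower K K[X] M]

lemma eq_zero_of_fiberMap_homogPart (hX : ∀ a : M, (X : K[X]) • a = 0 → a = 0) {a : M}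
    (h : ∀ j l, fiberMap hn hΛ l (homogPart hg.1 j a) = 0) : a = 0 :=
  eq_zero_of_homogPart hg.1 fun j =>
    eq_zero_of_fiberMap hn hΛ hg hX (homogPart_mem hg.1 j a) (h j)

lemma expandVec_eq_zero_iff {φ : Fiber hn hΛ M →ₗ[K] K} {σ : ℤ} {a : M} :
    expandVec hn hΛ hg φ σ a = 0 ↔
      ∀ j l, φ (fiberMap hn hΛ l (homogPart hg.1 j a)) = 0 := by
  refine ⟨fun h => apply_fiberMap_of_eq_zero hn hΛ hg φ σ h, fun h => ?_⟩
  refine LinearMap.mem_ker.1 (mem_of_forall_homogPart_mem hg fun j => ?_)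
  ext l
  rw [expandVec_of_mem hn hΛ hg φ σ (homogPart_mem hg.1 j a), h]
  simp

lemma expandVec_homogPart_eq_zero {φ : Fiber hn hΛ M →ₗ[K] K} {σ : ℤ} {a : M}
    (h : expandVec hn hΛ hg φ σ a = 0) (j : ℤ) :
    expandVec hn hΛ hg φ σ (homogPart hg.1 j a) = 0 := by
  ext l
  rw [expandVec_of_mem hn hΛ hg φ σ (homogPart_mem hg.1 j a),
    (expandVec_eq_zero_iff hn hΛ hg).1 h]
  simp

/-- In an indecomposable graded module, a vector of the fibre and a functional which are
adapted to all the filtrations span the whole fibre. -/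
lemma eq_zero_of_gradedIndecomposable (hX : ∀ a : M, (X : K[X]) • a = 0 → a = 0)
    (hind : GradedIndecomposable Λ M g) {v : Fiber hn hΛ M} {φ : Fiber hn hΛ M →ₗ[K] K}
    (hφ : φ v = 1)
    (h : ∀ l m, v ∈ fiberFilt hn hΛ hg l m ∨ ∀ w ∈ fiberFilt hn hΛ hg l m, φ w = 0)
    {w : Fiber hn hΛ M} (hw : φ w = 0) : w = 0 := by
  let A₁ : Submodule Λ M := ⨅ ψ : {ψ : Fiber hn hΛ M →ₗ[K] K // ψ v = 0},
    LinearMap.ker (expandVec hn hΛ hg ψ.1 0)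
  let A₂ : Submodule Λ M := LinearMap.ker (expandVec hn hΛ hg φ 0)
  have mem₁ : ∀ {a}, a ∈ A₁ ↔ ∀ ψ : Fiber hn hΛ M →ₗ[K] K, ψ v = 0 →
      expandVec hn hΛ hg ψ 0 a = 0 := by
    intro a
    simp [A₁]
  have diag₁ : ∀ {l m a}, a ∈ g m → (∃ c : K, fiberMap hn hΛ l a = c • v) →
      diagUnit hΛ l • a ∈ A₁ := by
    rintro l m a ha ⟨c, hc⟩
    exact mem₁.2 fun ψ hψ => expandVec_diagUnit_eq_zero hn hΛ hg ψ 0 ha (by simp [hc, hψ])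
  have diag₂ : ∀ {l m a}, a ∈ g m → φ (fiberMap hn hΛ l a) = 0 → diagUnit hΛ l • a ∈ A₂ :=
    fun ha h => expandVec_diagUnit_eq_zero hn hΛ hg φ 0 ha h
  obtain ⟨m, a, ha, hav⟩ := exists_mem_fiberFilt hn hΛ hg v
  obtain ⟨m', b, hb, hbw⟩ := exists_mem_fiberFilt hn hΛ hg w
  by_contra hw0
  refine hind.2 ⟨A₁, A₂, isGradedSubmodule_of_homogPart_mem hg fun a ha j => mem₁.2 fun ψ hψ =>
    expandVec_homogPart_eq_zero hn hΛ hg (mem₁.1 ha ψ hψ) j,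
    isGradedSubmodule_of_homogPart_mem hg fun a ha j =>
    expandVec_homogPart_eq_zero hn hΛ hg (LinearMap.mem_ker.1 ha) j, ⟨?_, ?_⟩, ?_, ?_⟩
  · rw [Submodule.disjoint_def]
    intro a h₁ h₂
    refine eq_zero_of_fiberMap_homogPart hn hΛ hg hX fun j l => ?_
    rw [← Module.forall_dual_apply_eq_zero_iff K]
    intro ψ
    have h₁' := (expandVec_eq_zero_iff hn hΛ hg).1 (mem₁.1 h₁ (ψ - ψ v • φ) (by simp [hφ])) j l
    have h₂' := (expandVec_eq_zero_iff hn hΛ hg).1 (LinearMap.mem_ker.1 h₂) j l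
    simpa [h₂'] using h₁'
  · rw [codisjoint_iff, eq_top_iff]
    rintro a -
    refine homog_induction hg.1 (p := fun a => a ∈ A₁ ⊔ A₂) a (zero_mem _) (fun m a ha => ?_)
      fun a b => add_mem
    rw [← sum_diagUnit_smul hΛ a]
    refine sum_mem fun l _ => ?_
    rcases h l m with ⟨b, hb, hbv⟩ | h
    · have hc := scalar_smul_mem hg (φ (fiberMap hn hΛ l a)) hb
      rw [← add_sub_cancel (φ (fiberMap hn hΛ l a) • b) a, smul_add]
      exact Submodule.add_mem_sup (diag₁ hc ⟨_, by rw [map_smul, hbv]⟩)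
        (diag₂ (sub_mem ha hc) (by simp [hbv, hφ]))
    · exact Submodule.mem_sup_right (diag₂ ha (h _ ⟨a, ha, rfl⟩))
  · intro h₁
    have := diag₁ ha ⟨1, by rw [hav, one_smul]⟩
    rw [h₁, Submodule.mem_bot] at this
    rw [← hav, ← fiberMap_diagUnit_smul, this] at hφ
    simp at hφ
  · intro h₂
    have := diag₂ hb (by rw [hbw, hw])
    rw [h₂, Submodule.mem_bot] at this
    rw [← hbw, ← fiberMap_diagUnit_smul, this, map_zero] at hw0
    exact hw0 rfl

/-- The vector `v` and the functional `φ` on the fibre span a direct summand of the type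
`(s, t)`. -/
structure IsSummand (v : Fiber hn hΛ M) (φ : Fiber hn hΛ M →ₗ[K] K) (s t : ℤ) : Prop where
  lt : s < t
  lt_add : t < s + n
  apply_eq_one : φ v = 1
  mem_even : v ∈ evenFilt hn hΛ hg s
  mem_odd : v ∈ oddFilt hn hΛ hg t
  apply_even : ∀ p, s < p → ∀ w ∈ evenFilt hn hΛ hg p, φ w = 0
  apply_odd : ∀ q, t < q → ∀ w ∈ oddFilt hn hΛ hg q, φ w = 0

lemma exists_isSummand (hX : ∀ a : M, (X : K[X]) • a = 0 → a = 0)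
    (hfin : Module.Finite K[X] M) (hind : GradedIndecomposable Λ M g) :
    ∃ s t v φ, IsSummand hn hΛ hg v φ s t ∧ ∀ w, φ w = 0 → w = 0 := by
  obtain ⟨m₀, hm₀⟩ := exists_lower_bound hg hfin
  obtain ⟨p₀, hp₀⟩ := evenFilt_eq_bot hn hΛ hg hm₀
  obtain ⟨w, hw⟩ : ∃ w : Fiber hn hΛ M, w ≠ 0 := by
    by_contra! h
    have := hind.1
    obtain ⟨a, ha⟩ := exists_ne (0 : M)
    exact ha (eq_zero_of_fiberMap_homogPart hn hΛ hg hX fun j l => h _)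
  obtain ⟨p, hp⟩ := exists_mem_evenFilt hn hΛ hg w
  obtain ⟨s, hs, hs'⟩ := Int.exists_greatest_of_bdd (P := fun p => evenFilt hn hΛ hg p ≠ ⊥)
    ⟨p₀, fun p h => not_lt.1 fun h' => h (hp₀ p h')⟩
    ⟨p, fun h => hw ((Submodule.mem_bot K).1 (h ▸ hp))⟩
  have hbot : ∀ p, s < p → evenFilt hn hΛ hg p = ⊥ := fun p h => by
    by_contra h'
    exact not_le.2 h (hs' p h')
  have hnext : evenFilt hn hΛ hg s ⊓ oddFilt hn hΛ hg (s + 1) ≠ ⊥ := by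
    rwa [inf_eq_left.2 (evenFilt_le_oddFilt hn hΛ hg s)]
  have hbd : ∀ q, evenFilt hn hΛ hg s ⊓ oddFilt hn hΛ hg q ≠ ⊥ → q ≤ s + n - 1 := by
    intro q h
    by_contra! hq
    refine h (eq_bot_iff.2 (inf_le_right.trans ?_))
    rw [← hbot (q - n + 1) (by omega)]
    exact oddFilt_le_evenFilt hn hΛ hg q
  obtain ⟨t, ht, ht'⟩ := Int.exists_greatest_of_bdd
    (P := fun q => evenFilt hn hΛ hg s ⊓ oddFilt hn hΛ hg q ≠ ⊥) ⟨s + n - 1, hbd⟩ ⟨s + 1, hnext⟩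
  obtain ⟨v, ⟨hvs, hvt⟩, hv⟩ := Submodule.exists_mem_ne_zero_of_ne_bot ht
  have hv' : v ∉ oddFilt hn hΛ hg (t + 1) := fun h =>
    absurd (ht' (t + 1) ((Submodule.ne_bot_iff _).2 ⟨v, ⟨hvs, h⟩, hv⟩)) (by omega)
  obtain ⟨ψ, hψ, hψ'⟩ := Submodule.exists_le_ker_of_notMem hv'
  have hst := ht' _ hnext
  have hts := hbd t ht
  have hodd : ∀ q, t < q → ∀ w ∈ oddFilt hn hΛ hg q, ((ψ v)⁻¹ • ψ) w = 0 := fun q h w hw => by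
    have := hψ' (oddFilt_antitone hn hΛ hg (show t + 1 ≤ q by omega) hw)
    rw [LinearMap.smul_apply, LinearMap.mem_ker.1 this, smul_zero]
  have heven : ∀ p, s < p → ∀ w ∈ evenFilt hn hΛ hg p, ((ψ v)⁻¹ • ψ) w = 0 := fun p h w hw => by
    rw [hbot p h, Submodule.mem_bot] at hw
    rw [hw, map_zero]
  have hone : ((ψ v)⁻¹ • ψ) v = 1 := inv_mul_cancel₀ hψ
  refine ⟨s, t, v, (ψ v)⁻¹ • ψ,
    ⟨by omega, by omega, hone, hvs, hvt, heven, hodd⟩, fun w hw =>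
    eq_zero_of_gradedIndecomposable hn hΛ hg hX hind hone (fun l m => ?_) hw⟩
  obtain ⟨p, hp | hp⟩ := fiberFilt_eq hn hΛ hg l m
  · rw [hp]
    exact (le_or_gt p s).imp (fun h => evenFilt_antitone hn hΛ hg h hvs) (heven p)
  · rw [hp]
    exact (le_or_gt p t).imp (fun h => oddFilt_antitone hn hΛ hg h hvt) (hodd p)

variable {hn hΛ hg}

namespace IsSummand

variable {v : Fiber hn hΛ M} {φ : Fiber hn hΛ M →ₗ[K] K} {s t : ℤ}

lemma mem_evenFilt_iff (h : IsSummand hn hΛ hg v φ s t) {p : ℤ} :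
    v ∈ evenFilt hn hΛ hg p ↔ p ≤ s := by
  refine ⟨fun hv => ?_, fun hp => evenFilt_antitone hn hΛ hg hp h.mem_even⟩
  by_contra! hp
  simpa [h.apply_eq_one] using h.apply_even p hp v hv

lemma mem_oddFilt_iff (h : IsSummand hn hΛ hg v φ s t) {q : ℤ} :
    v ∈ oddFilt hn hΛ hg q ↔ q ≤ t := by
  refine ⟨fun hv => ?_, fun hq => oddFilt_antitone hn hΛ hg hq h.mem_odd⟩
  by_contra! hq
  simpa [h.apply_eq_one] using h.apply_odd q hq v hv

lemma apply_fiberFilt (h : IsSummand hn hΛ hg v φ s t) (l : Fin n) (m : ℤ)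
    (hm : (baseIdx n s t).2.2 + m < dExp (baseIdx n s t).1 (baseIdx n s t).2.1 l)
    (w : Fiber hn hΛ M) (hw : w ∈ fiberFilt hn hΛ hg l m) : φ w = 0 := by
  have hb := (baseIdx_spec hn h.lt h.lt_add).2.2.2
  obtain ⟨p, rfl, rfl | rfl⟩ := exists_rowOf_eq hn l m
  · exact h.apply_even p (not_le.1 fun hp => absurd ((hb p).1.2 hp) (not_le.2 hm)) w hw
  · exact h.apply_odd p (not_le.1 fun hp => absurd ((hb p).2.2 hp) (not_le.2 hm)) w hw

lemma mem_fiberFilt (h : IsSummand hn hΛ hg v φ s t) (l : Fin n) (m : ℤ)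
    (hm : dExp (baseIdx n s t).1 (baseIdx n s t).2.1 l ≤ (baseIdx n s t).2.2 + m) :
    v ∈ fiberFilt hn hΛ hg l m := by
  have hb := (baseIdx_spec hn h.lt h.lt_add).2.2.2
  obtain ⟨p, rfl, rfl | rfl⟩ := exists_rowOf_eq hn l m
  · exact h.mem_evenFilt_iff.2 ((hb p).1.1 hm)
  · exact h.mem_oddFilt_iff.2 ((hb p).2.1 hm)

variable {E : ℕ → ℕ → Submodule Λ (Fin n → RatFunc K)}
variable (hE : ∀ i j : ℕ, 1 ≤ i → i < j → j ≤ n →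
  (E i j : Set (Fin n → RatFunc K)) = ijSet K n i j)

include hE in
lemma mem_iff (h : IsSummand hn hΛ hg v φ s t) {w : Fin n → RatFunc K} :
    w ∈ E (baseIdx n s t).1 (baseIdx n s t).2.1 ↔
      w ∈ ijSet K n (baseIdx n s t).1 (baseIdx n s t).2.1 := by
  obtain ⟨h₁, h₂, h₃, -⟩ := baseIdx_spec hn h.lt h.lt_add
  rw [← hE _ _ h₁ h₂ h₃]
  rfl

/-- The projection to a direct summand. -/
def proj (h : IsSummand hn hΛ hg v φ s t) :
    M →ₗ[Λ] E (baseIdx n s t).1 (baseIdx n s t).2.1 :=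
  (expandVec hn hΛ hg φ (baseIdx n s t).2.2).codRestrict _ fun a => (h.mem_iff hE).2
    (expandVec_mem_ijSet hn hΛ hg φ _ h.apply_fiberFilt a)

lemma coe_proj (h : IsSummand hn hΛ hg v φ s t) (a : M) :
    (h.proj hE a : Fin n → RatFunc K) = expandVec hn hΛ hg φ (baseIdx n s t).2.2 a := rfl

lemma proj_mem (h : IsSummand hn hΛ hg v φ s t) {m : ℤ} {a : M} (ha : a ∈ g m) :
    h.proj hE a ∈ gEij Λ E (baseIdx n s t).1 (baseIdx n s t).2.1 ((baseIdx n s t).2.2 + m) :=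
  expandVec_mem_homogGroup hn hΛ hg φ _ ha

lemma apply_fiberMap_of_proj_mem (h : IsSummand hn hΛ hg v φ s t) {m : ℤ} {a : M}
    (ha : h.proj hE a ∈
      gEij Λ E (baseIdx n s t).1 (baseIdx n s t).2.1 ((baseIdx n s t).2.2 + m))
    {j : ℤ} (hj : j ≠ m) (l : Fin n) : φ (fiberMap hn hΛ l (homogPart hg.1 j a)) = 0 :=
  apply_fiberMap_of_homog hn hΛ hg φ _ ha hj l

lemma proj_eq_zero_iff (h : IsSummand hn hΛ hg v φ s t) {a : M} :
    h.proj hE a = 0 ↔ ∀ j l, φ (fiberMap hn hΛ l (homogPart hg.1 j a)) = 0 := by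
  rw [← expandVec_eq_zero_iff hn hΛ hg (σ := (baseIdx n s t).2.2), ← coe_proj hE h,
    ZeroMemClass.coe_eq_zero]

lemma exists_proj_eq (h : IsSummand hn hΛ hg v φ s t)
    (w : E (baseIdx n s t).1 (baseIdx n s t).2.1) : ∃ a, h.proj hE a = w ∧
      ∀ φ' : Fiber hn hΛ M →ₗ[K] K, ∀ σ', φ' v = 0 → expandVec hn hΛ hg φ' σ' a = 0 := by
  obtain ⟨a, ha, ha'⟩ := exists_expandVec_eq hn hΛ hg φ _ h.mem_fiberFilt h.apply_eq_one
    ((h.mem_iff hE).1 w.2)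
  exact ⟨a, Subtype.ext ha, ha'⟩

lemma proj_bijective (h : IsSummand hn hΛ hg v φ s t)
    (hX : ∀ a : M, (X : K[X]) • a = 0 → a = 0) (hφ : ∀ w, φ w = 0 → w = 0) :
    Function.Bijective (h.proj hE) := by
  refine ⟨(injective_iff_map_eq_zero _).2 fun a ha =>
    eq_zero_of_fiberMap_homogPart hn hΛ hg hX fun j l =>
      hφ _ ((h.proj_eq_zero_iff hE).1 ha j l), fun w => ?_⟩
  obtain ⟨a, ha, -⟩ := h.exists_proj_eq hE w
  exact ⟨a, ha⟩

include hE in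
lemma gradedIsoTo (h : IsSummand hn hΛ hg v φ s t)
    (hX : ∀ a : M, (X : K[X]) • a = 0 → a = 0) (hφ : ∀ w, φ w = 0 → w = 0) :
    GradedIsoTo Λ E M g s t :=
  ⟨LinearEquiv.ofBijective (h.proj hE) (h.proj_bijective hE hX hφ), fun _ a =>
    ⟨h.proj_mem hE, fun ha => mem_of_homogPart hg.1 fun j hj =>
      eq_zero_of_fiberMap hn hΛ hg hX (homogPart_mem hg.1 j a) fun l =>
        hφ _ (h.apply_fiberMap_of_proj_mem hE ha hj l)⟩⟩

/-- The sum of two complementary direct summands. -/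
lemma exists_equiv_prod {v' : Fiber hn hΛ M} {φ' : Fiber hn hΛ M →ₗ[K] K} {s' t' : ℤ}
    (h : IsSummand hn hΛ hg v φ s t) (h' : IsSummand hn hΛ hg v' φ' s' t')
    (hX : ∀ a : M, (X : K[X]) • a = 0 → a = 0) (hv' : φ v' = 0) (hv : φ' v = 0)
    (hφ : ∀ w, φ w = 0 → φ' w = 0 → w = 0) :
    ∃ e : M ≃ₗ[Λ] E (baseIdx n s t).1 (baseIdx n s t).2.1 ×
        E (baseIdx n s' t').1 (baseIdx n s' t').2.1,
      (∀ a, e a = (h.proj hE a, h'.proj hE a)) ∧ ∀ (m : ℤ) (a : M), a ∈ g m ↔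
        e a ∈ (gEij Λ E (baseIdx n s t).1 (baseIdx n s t).2.1 ((baseIdx n s t).2.2 + m)).prod
          (gEij Λ E (baseIdx n s' t').1 (baseIdx n s' t').2.1
            ((baseIdx n s' t').2.2 + m)) := by
  have hinj : Function.Injective ((h.proj hE).prod (h'.proj hE)) :=
    (injective_iff_map_eq_zero _).2 fun a ha =>
      eq_zero_of_fiberMap_homogPart hn hΛ hg hX fun j l =>
        hφ _ ((h.proj_eq_zero_iff hE).1 (congrArg Prod.fst ha) j l)
          ((h'.proj_eq_zero_iff hE).1 (congrArg Prod.snd ha) j l)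
  refine ⟨LinearEquiv.ofBijective ((h.proj hE).prod (h'.proj hE)) ⟨hinj, fun w => ?_⟩,
    fun _ => rfl, fun m a => ⟨fun ha => ⟨h.proj_mem hE ha, h'.proj_mem hE ha⟩,
      fun ha => mem_of_homogPart hg.1 fun j hj =>
        eq_zero_of_fiberMap hn hΛ hg hX (homogPart_mem hg.1 j a) fun l =>
          hφ _ (h.apply_fiberMap_of_proj_mem hE ha.1 hj l)
            (h'.apply_fiberMap_of_proj_mem hE ha.2 hj l)⟩⟩
  obtain ⟨a, ha, ha'⟩ := h.exists_proj_eq hE w.1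
  obtain ⟨b, hb, hb'⟩ := h'.exists_proj_eq hE w.2
  have hb0 : h.proj hE b = 0 := Subtype.ext (hb' φ _ hv')
  have ha0 : h'.proj hE a = 0 := Subtype.ext (ha' φ' _ hv)
  refine ⟨a + b, Prod.ext ?_ ?_⟩
  · simp [ha, hb0]
  · simp [hb, ha0]

end IsSummand

end Structure

section FiberLin

variable {K : Type} [Field K] {n : ℕ} (hn : 3 ≤ n)
variable {Λ : Subalgebra K[X] (Matrix (Fin n) (Fin n) (RatFunc K))}
variable (hΛ : (Λ : Set (Matrix (Fin n) (Fin n) (RatFunc K))) = lambdaCarrier K n)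
variable {M : Type*} [AddCommGroup M] [Module Λ M]
variable {N : Type*} [AddCommGroup N] [Module Λ N]
variable {g : ℤ → AddSubgroup M} (hg : IsModGrading Λ M g)
variable {g' : ℤ → AddSubgroup N} (hg' : IsModGrading Λ N g')
variable (f : M →ₗ[Λ] N)

include hg hg' in
lemma map_homogPart (hf : ∀ m, ∀ a ∈ g m, f a ∈ g' m) (j : ℤ) (a : M) :
    f (homogPart hg.1 j a) = homogPart hg'.1 j (f a) := by
  refine homog_induction hg.1 (p := fun a => f (homogPart hg.1 j a) = homogPart hg'.1 j (f a)) a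
    (by simp) (fun m a ha => ?_) ?_
  · rcases eq_or_ne j m with rfl | hj
    · rw [homogPart_same hg.1 ha, homogPart_same hg'.1 (hf _ _ ha)]
    · rw [homogPart_of_ne hg.1 ha hj, homogPart_of_ne hg'.1 (hf _ _ ha) hj, map_zero]
  · intro a b ha hb
    rw [map_add, map_add, ha, hb, map_add, map_add]

variable [Module K[X] M] [IsScalarTower K[X] Λ M] [Module K M] [IsScalarTower K K[X] M]
variable [Module K[X] N] [IsScalarTower K[X] Λ N] [Module K N] [IsScalarTower K K[X] N]

/-- A `Λ`-linear map as a `K`-linear map. -/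
def scalarLin : M →ₗ[K] N where
  toFun := f
  map_add' := map_add f
  map_smul' c a := by
    rw [← C_smul_eq, LinearMap.map_smul_of_tower, C_smul_eq, RingHom.id_apply]

/-- The map induced on the fibres by a `Λ`-linear map. -/
def fiberLin : Fiber hn hΛ M →ₗ[K] Fiber hn hΛ N :=
  (fiberRel hn hΛ M).mapQ (fiberRel hn hΛ N) (scalarLin f) fun a ha => by
    obtain ⟨b, hb⟩ := mem_fiberRel hn hΛ |>.1 ha
    refine (mem_fiberRel hn hΛ).2 ⟨f b, ?_⟩
    change _ = rowUnit hn hΛ (firstIdx hn) • f a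
    rw [← map_smul f _ a, ← hb, map_sub, LinearMap.map_smul_of_tower, map_smul]

lemma fiberLin_fiberMap (l : Fin n) (a : M) :
    fiberLin hn hΛ f (fiberMap hn hΛ l a) = fiberMap hn hΛ l (f a) := by
  change (fiberRel hn hΛ N).mkQ (f (rowUnit hn hΛ l • a)) = _
  rw [map_smul, fiberMap_apply]

variable {f}

lemma fiberLin_mem (hf : ∀ m, ∀ a ∈ g m, f a ∈ g' m) {l : Fin n} {m : ℤ} {v : Fiber hn hΛ M}
    (hv : v ∈ fiberFilt hn hΛ hg l m) : fiberLin hn hΛ f v ∈ fiberFilt hn hΛ hg' l m := by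
  obtain ⟨a, ha, rfl⟩ := hv
  exact ⟨f a, hf m a ha, (fiberLin_fiberMap hn hΛ f l a).symm⟩

include hg hg' in
lemma fiberLin_injective (hX : ∀ a : N, (X : K[X]) • a = 0 → a = 0)
    (hf : ∀ m, ∀ a ∈ g m, f a ∈ g' m) (hinj : Function.Injective f) :
    Function.Injective (fiberLin hn hΛ f) := by
  rw [injective_iff_map_eq_zero]
  intro v hv
  obtain ⟨m, a, ha, rfl⟩ := exists_mem_fiberFilt hn hΛ hg v
  rw [fiberLin_fiberMap] at hv
  have := diagUnit_smul_eq_zero hn hΛ hg' hX (hf m a ha) hv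
  rw [← map_smul] at this
  rw [← fiberMap_diagUnit_smul, hinj (this.trans (map_zero f).symm), map_zero]

lemma exists_fiberLin_eq_of_surjective (hf : ∀ m, ∀ a ∈ g m, f a ∈ g' m)
    (hsurj : Function.Surjective f) {l : Fin n} {m : ℤ} {w : Fiber hn hΛ N}
    (hw : w ∈ fiberFilt hn hΛ hg' l m) : ∃ v ∈ fiberFilt hn hΛ hg l m,
      fiberLin hn hΛ f v = w := by
  obtain ⟨b, hb, rfl⟩ := hw
  obtain ⟨a, rfl⟩ := hsurj b
  refine ⟨_, ⟨homogPart hg.1 m a, homogPart_mem hg.1 m a, rfl⟩, ?_⟩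
  rw [fiberLin_fiberMap, map_homogPart hg hg' f hf, homogPart_same hg'.1 hb]

lemma expandVec_comp (hf : ∀ m, ∀ a ∈ g m, f a ∈ g' m) (φ : Fiber hn hΛ N →ₗ[K] K) (σ : ℤ)
    (a : M) : expandVec hn hΛ hg (φ ∘ₗ fiberLin hn hΛ f) σ a =
      expandVec hn hΛ hg' φ σ (f a) := by
  refine homog_induction hg.1 (p := fun a => expandVec hn hΛ hg (φ ∘ₗ fiberLin hn hΛ f) σ a =
      expandVec hn hΛ hg' φ σ (f a)) a (by simp) (fun m a ha => ?_) ?_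
  · ext l
    rw [expandVec_of_mem hn hΛ hg _ σ ha, expandVec_of_mem hn hΛ hg' _ σ (hf m a ha),
      LinearMap.comp_apply, fiberLin_fiberMap]
  · intro a b ha hb
    rw [map_add, ha, hb, map_add, map_add]

variable {L : Type*} [AddCommGroup L] [Module Λ L] [Module K[X] L] [IsScalarTower K[X] Λ L]
  [Module K L] [IsScalarTower K K[X] L]
variable {g'' : ℤ → AddSubgroup L} (hg'' : IsModGrading Λ L g'') {f' : N →ₗ[Λ] L}

include hg'' in
lemma exists_fiberLin_eq_of_exact (hX : ∀ a : L, (X : K[X]) • a = 0 → a = 0)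
    (hf : ∀ m, ∀ a ∈ g m, f a ∈ g' m) (hf' : ∀ m, ∀ a ∈ g' m, f' a ∈ g'' m)
    (hinj : Function.Injective f) (hexact : LinearMap.range f = LinearMap.ker f')
    {l : Fin n} {m : ℤ} {w : Fiber hn hΛ N} (hw : w ∈ fiberFilt hn hΛ hg' l m)
    (hw' : fiberLin hn hΛ f' w = 0) :
    ∃ v ∈ fiberFilt hn hΛ hg l m, fiberLin hn hΛ f v = w := by
  obtain ⟨b, hb, rfl⟩ := hw
  rw [fiberLin_fiberMap] at hw'
  have h0 := diagUnit_smul_eq_zero hn hΛ hg'' hX (hf' m b hb) hw'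
  rw [← map_smul, ← LinearMap.mem_ker, ← hexact] at h0
  obtain ⟨a, ha⟩ := h0
  have hm : f a ∈ g' m := by
    rw [ha]
    exact matUnit_smul_mem hΛ hg' _ hb (add_zero m)
  refine ⟨fiberMap hn hΛ l a, ⟨a, mem_of_homogPart hg.1 fun j hj => hinj ?_, rfl⟩, ?_⟩
  · rw [map_homogPart hg hg' f hf, homogPart_of_ne hg'.1 hm hj, map_zero]
  · rw [fiberLin_fiberMap, ha, fiberMap_diagUnit_smul]

end FiberLin

section Extension

lemma exists_functional {K V : Type*} [Field K] [AddCommGroup V] [Module K V] {γ : V →ₗ[K] K}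
    {u w : V} (hw : γ w = 1) (h : u ≠ γ u • w) : ∃ ψ : V →ₗ[K] K, ψ u = 1 ∧ ψ w = 0 := by
  have hu : u ∉ Submodule.span K {w} := by
    rw [Submodule.mem_span_singleton]
    rintro ⟨c, rfl⟩
    simp [hw] at h
  obtain ⟨ψ, h₁, h₂⟩ := Submodule.exists_le_ker_of_notMem hu
  refine ⟨(ψ u)⁻¹ • ψ, inv_mul_cancel₀ h₁, ?_⟩
  rw [LinearMap.smul_apply, LinearMap.mem_ker.1 (h₂ (Submodule.mem_span_singleton_self w)),
    smul_zero]

variable {K : Type} [Field K] {n : ℕ} (hn : 3 ≤ n)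
variable {Λ : Subalgebra K[X] (Matrix (Fin n) (Fin n) (RatFunc K))}
variable (hΛ : (Λ : Set (Matrix (Fin n) (Fin n) (RatFunc K))) = lambdaCarrier K n)
variable {E : ℕ → ℕ → Submodule Λ (Fin n → RatFunc K)}
variable (hE : ∀ i j : ℕ, 1 ≤ i → i < j → j ≤ n →
  (E i j : Set (Fin n → RatFunc K)) = ijSet K n i j)
variable {A : Type*} [AddCommGroup A] [Module Λ A] [Module K[X] A] [IsScalarTower K[X] Λ A]
  [Module K A] [IsScalarTower K K[X] A]
variable {B : Type*} [AddCommGroup B] [Module Λ B] [Module K[X] B] [IsScalarTower K[X] Λ B]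
  [Module K B] [IsScalarTower K K[X] B]
variable {C : Type*} [AddCommGroup C] [Module Λ C] [Module K[X] C] [IsScalarTower K[X] Λ C]
  [Module K C] [IsScalarTower K K[X] C]
variable {gA : ℤ → AddSubgroup A} {hgA : IsModGrading Λ A gA}
variable {gB : ℤ → AddSubgroup B} {hgB : IsModGrading Λ B gB}
variable {gC : ℤ → AddSubgroup C} {hgC : IsModGrading Λ C gC}

variable {hn hΛ} in
include hE in
/-- If a complement of a summand of `B` maps isomorphically onto `C`, then `B → C` splits. -/
lemma exists_section (g : B →ₗ[Λ] C) (hgdeg : ∀ m, ∀ v ∈ gB m, g v ∈ gC m)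
    (hXB : ∀ a : B, (X : K[X]) • a = 0 → a = 0) (hXC : ∀ a : C, (X : K[X]) • a = 0 → a = 0)
    {v' : Fiber hn hΛ C} {φ' : Fiber hn hΛ C →ₗ[K] K} {s s' t t' : ℤ}
    (hC : IsSummand hn hΛ hgC v' φ' s' t') (hφ' : ∀ w, φ' w = 0 → w = 0)
    {α β : Fiber hn hΛ B} {ρ : Fiber hn hΛ B →ₗ[K] K}
    (hα : IsSummand hn hΛ hgB α ρ s t)
    (hβ : IsSummand hn hΛ hgB β (φ' ∘ₗ fiberLin hn hΛ g) s' t')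
    (hρβ : ρ β = 0) (hα0 : φ' (fiberLin hn hΛ g α) = 0)
    (hsep : ∀ w, φ' (fiberLin hn hΛ g w) = 0 → ρ w = 0 → w = 0) :
    ∃ sec : C →ₗ[Λ] B, g ∘ₗ sec = LinearMap.id ∧ ∀ m, ∀ v ∈ gC m, sec v ∈ gB m := by
  obtain ⟨e, he, he'⟩ := hβ.exists_equiv_prod hE hα hXB hα0 hρβ hsep
  refine ⟨e.symm.toLinearMap ∘ₗ LinearMap.inl _ _ _ ∘ₗ hC.proj hE, ?_, fun m c hc => ?_⟩
  · ext c
    apply (hC.proj_bijective hE hXC hφ').1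
    have h : ∀ b, hC.proj hE (g b) = (e b).1 := fun b => by
      rw [he]
      exact Subtype.ext (expandVec_comp hn hΛ hgB hgC hgdeg φ' _ b).symm
    simp [h]
  · rw [he']
    simp only [LinearMap.comp_apply, LinearEquiv.coe_coe, LinearEquiv.apply_symm_apply]
    exact ⟨hC.proj_mem hE hc, zero_mem _⟩

include hn hΛ hE hgA hgB hgC in
/-- The classification of non-split extensions. -/
theorem exists_isSummand_of_nonsplit
    (hXA : ∀ a : A, (X : K[X]) • a = 0 → a = 0) (hXB : ∀ a : B, (X : K[X]) • a = 0 → a = 0)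
    (hXC : ∀ a : C, (X : K[X]) • a = 0 → a = 0)
    (hAfin : Module.Finite K[X] A) (hCfin : Module.Finite K[X] C)
    (hAind : GradedIndecomposable Λ A gA) (hCind : GradedIndecomposable Λ C gC)
    (f : A →ₗ[Λ] B) (g : B →ₗ[Λ] C)
    (hfdeg : ∀ m, ∀ v ∈ gA m, f v ∈ gB m) (hgdeg : ∀ m, ∀ v ∈ gB m, g v ∈ gC m)
    (hf : Function.Injective f) (hg : Function.Surjective g)
    (hexact : LinearMap.range f = LinearMap.ker g)
    (hnonsplit : ¬ ∃ sec : C →ₗ[Λ] B,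
      g ∘ₗ sec = LinearMap.id ∧ ∀ m, ∀ v ∈ gC m, sec v ∈ gB m) :
    ∃ s s' t t' : ℤ, s < s' ∧ s' < t ∧ t < t' ∧ t' < s + n ∧
      GradedIsoTo Λ E A gA s t ∧ GradedIsoToSum Λ E B gB s t' s' t ∧
      GradedIsoTo Λ E C gC s' t' := by
  obtain ⟨s, t, v, φ, hA, hφ⟩ := exists_isSummand hn hΛ hgA hXA hAfin hAind
  obtain ⟨s', t', v', φ', hC, hφ'⟩ := exists_isSummand hn hΛ hgC hXC hCfin hCind
  set α := fiberLin hn hΛ f v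
  set γ := φ' ∘ₗ fiberLin hn hΛ g with hγ
  have hα0 : α ≠ 0 := fun h => by
    have := fiberLin_injective hn hΛ hgA hgB hXB hfdeg hf (h.trans (map_zero _).symm)
    simpa [this] using hA.apply_eq_one
  have hγα : γ α = 0 := by
    obtain ⟨m, a, -, ha⟩ := exists_mem_fiberFilt hn hΛ hgA v
    have : g (f a) = 0 := LinearMap.mem_ker.1 (hexact ▸ LinearMap.mem_range_self f a)
    simp [hγ, α, ← ha, fiberLin_fiberMap, this]
  have hlift : ∀ {l m w}, w ∈ fiberFilt hn hΛ hgB l m → γ w = 0 →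
      ∃ u ∈ fiberFilt hn hΛ hgA l m, fiberLin hn hΛ f u = w := fun hw hw' =>
    exists_fiberLin_eq_of_exact hn hΛ hgA hgB hgC hXC hfdeg hgdeg hf hexact hw (hφ' _ hw')
  have hker : ∀ w, γ w = 0 → ∃ c : K, w = c • α := fun w hw => by
    obtain ⟨m, hm⟩ := exists_mem_fiberFilt hn hΛ hgB w
    obtain ⟨u, -, rfl⟩ := hlift hm hw
    have hu := hφ (u - φ u • v) (by simp [hA.apply_eq_one])
    exact ⟨φ u, by rw [← map_smul, ← sub_eq_zero.1 hu]⟩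
  have hkere : ∀ p, s < p → ∀ w ∈ evenFilt hn hΛ hgB p, γ w = 0 → w = 0 := fun p hp w hw hw' => by
    obtain ⟨u, hu, rfl⟩ := hlift hw hw'
    rw [hφ u (hA.apply_even p hp u hu), map_zero]
  have hkero : ∀ q, t < q → ∀ w ∈ oddFilt hn hΛ hgB q, γ w = 0 → w = 0 := fun q hq w hw hw' => by
    obtain ⟨u, hu, rfl⟩ := hlift hw hw'
    rw [hφ u (hA.apply_odd q hq u hu), map_zero]
  have hγe : ∀ p, s' < p → ∀ w ∈ evenFilt hn hΛ hgB p, γ w = 0 := fun p hp w hw =>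
    hC.apply_even p hp _ (fiberLin_mem hn hΛ hgB hgC hgdeg hw)
  have hγo : ∀ q, t' < q → ∀ w ∈ oddFilt hn hΛ hgB q, γ w = 0 := fun q hq w hw =>
    hC.apply_odd q hq _ (fiberLin_mem hn hΛ hgB hgC hgdeg hw)
  have hαe : α ∈ evenFilt hn hΛ hgB s := fiberLin_mem hn hΛ hgA hgB hfdeg hA.mem_even
  have hαo : α ∈ oddFilt hn hΛ hgB t := fiberLin_mem hn hΛ hgA hgB hfdeg hA.mem_odd
  have hψe : ∀ (ψ : Fiber hn hΛ B →ₗ[K] K) (ν : Fiber hn hΛ B), γ ν = 1 →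
      ν ∈ evenFilt hn hΛ hgB s' → ψ ν = 0 → ∀ p, s < p → ∀ w ∈ evenFilt hn hΛ hgB p, ψ w = 0 := by
    intro ψ ν hν hνs hψ p hp w hw
    rcases le_or_gt p s' with h | h
    · have := hkere p hp (w - γ w • ν) (sub_mem hw (Submodule.smul_mem _ _
        (evenFilt_antitone hn hΛ hgB h hνs))) (by simp [hν])
      rw [sub_eq_zero.1 this, map_smul, hψ, smul_zero]
    · rw [hkere p hp w hw (hγe p h w hw), map_zero]
  have hψo : ∀ (ψ : Fiber hn hΛ B →ₗ[K] K) (ν : Fiber hn hΛ B), γ ν = 1 →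
      ν ∈ oddFilt hn hΛ hgB t' → ψ ν = 0 → ∀ q, t < q → ∀ w ∈ oddFilt hn hΛ hgB q, ψ w = 0 := by
    intro ψ ν hν hνt hψ q hq w hw
    rcases le_or_gt q t' with h | h
    · have := hkero q hq (w - γ w • ν) (sub_mem hw (Submodule.smul_mem _ _
        (oddFilt_antitone hn hΛ hgB h hνt))) (by simp [hν])
      rw [sub_eq_zero.1 this, map_smul, hψ, smul_zero]
    · rw [hkero q hq w hw (hγo q h w hw), map_zero]
  have hsplit : ∀ β ∈ evenFilt hn hΛ hgB s', β ∈ oddFilt hn hΛ hgB t' → γ β = 1 → False := by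
    intro β hβe hβo hβ
    obtain ⟨ρ, hρα, hρβ⟩ := exists_functional (u := α) hβ (by rwa [hγα, zero_smul])
    refine hnonsplit (exists_section hE g hgdeg hXB hXC hC hφ' (hgB := hgB) (α := α) (β := β)
      (ρ := ρ) (s := s) (t := t)
      ⟨hA.lt, hA.lt_add, hρα, hαe, hαo, hψe ρ β hβ hβe hρβ, hψo ρ β hβ hβo hρβ⟩
      ⟨hC.lt, hC.lt_add, hβ, hβe, hβo, hγe, hγo⟩ hρβ hγα fun w hw hw' => ?_)
    obtain ⟨c, rfl⟩ := hker w hw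
    rw [map_smul, hρα, smul_eq_mul, mul_one] at hw'
    rw [hw', zero_smul]
  obtain ⟨β, hβe, hβ⟩ := exists_fiberLin_eq_of_surjective hn hΛ hgB hgC hgdeg hg hC.mem_even
  obtain ⟨β', hβo', hβ'⟩ := exists_fiberLin_eq_of_surjective hn hΛ hgB hgC hgdeg hg hC.mem_odd
  replace hβ : γ β = 1 := by rw [hγ, LinearMap.comp_apply, hβ, hC.apply_eq_one]
  replace hβ' : γ β' = 1 := by rw [hγ, LinearMap.comp_apply, hβ', hC.apply_eq_one]
  change β ∈ evenFilt hn hΛ hgB s' at hβe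
  change β' ∈ oddFilt hn hΛ hgB t' at hβo'
  obtain ⟨δ, hδ⟩ := hker (β - β') (by rw [map_sub, hβ, hβ', sub_self])
  have hss' : s < s' := by
    by_contra! h
    refine hsplit β' ?_ hβo' hβ'
    rw [← sub_sub_cancel β β', hδ]
    exact sub_mem hβe (Submodule.smul_mem _ _ (evenFilt_antitone hn hΛ hgB h hαe))
  have htt' : t < t' := by
    by_contra! h
    refine hsplit β hβe ?_ hβ
    rw [← sub_add_cancel β β', hδ]
    exact add_mem (Submodule.smul_mem _ _ (oddFilt_antitone hn hΛ hgB h hαo)) hβo'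
  have hne : β ≠ β' := fun h => hsplit β hβe (h ▸ hβo') hβ
  have hδ0 : δ ≠ 0 := fun h => hne (sub_eq_zero.1 (by rw [hδ, h, zero_smul]))
  have hβo : β ∈ oddFilt hn hΛ hgB t := by
    rw [← sub_add_cancel β β', hδ]
    exact add_mem (Submodule.smul_mem _ _ hαo) (oddFilt_antitone hn hΛ hgB htt'.le hβo')
  have hβe' : β' ∈ evenFilt hn hΛ hgB s := by
    rw [← sub_sub_cancel β β', hδ]
    exact sub_mem (evenFilt_antitone hn hΛ hgB hss'.le hβe) (Submodule.smul_mem _ _ hαe)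
  obtain ⟨φ₁, hφ₁, hφ₁'⟩ := exists_functional (u := β) hβ' (by rwa [hβ, one_smul])
  obtain ⟨φ₂, hφ₂, hφ₂'⟩ := exists_functional (u := β') hβ (by rw [hβ', one_smul]; exact hne.symm)
  have h₁o := hψo φ₁ β' hβ' hβo' hφ₁'
  have h₂e := hψe φ₂ β hβ hβe hφ₂'
  have hs't : s' < t := by
    by_contra! h
    have := h₁o (s' + 1) (by omega) β (evenFilt_le_oddFilt hn hΛ hgB s' hβe)
    simp [hφ₁] at this
  have ht's : t' < s + n := by
    by_contra! h
    have := h₂e (t' - n + 1) (by omega) β' (oddFilt_le_evenFilt hn hΛ hgB t' hβo')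
    simp [hφ₂] at this
  have h₁ : IsSummand hn hΛ hgB β φ₁ s' t :=
    ⟨hs't, by omega, hφ₁, hβe, hβo, fun p hp w hw => by
      rw [hkere p (by omega) w hw (hγe p hp w hw), map_zero], h₁o⟩
  have h₂ : IsSummand hn hΛ hgB β' φ₂ s t' :=
    ⟨by omega, ht's, hφ₂, hβe', hβo', h₂e, fun q hq w hw => by
      rw [hkero q (by omega) w hw (hγo q hq w hw), map_zero]⟩
  obtain ⟨e, -, he⟩ := h₂.exists_equiv_prod hE h₁ hXB hφ₂' hφ₁' fun w hw₂ hw₁ => by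
    obtain ⟨c, hc⟩ := hker (w - γ w • β) (by simp [hβ])
    have hα : α = δ⁻¹ • (β - β') := by rw [hδ, inv_smul_smul₀ hδ0]
    have hw : w = γ w • β + (c * δ⁻¹) • (β - β') := by
      rw [mul_smul, ← hα, ← hc, add_sub_cancel]
    have e₁ : γ w + c * δ⁻¹ = 0 := by
      rw [hw] at hw₁
      simpa [hφ₁, hφ₁', hβ, hβ'] using hw₁
    have e₂ : c * δ⁻¹ = 0 := by
      rw [hw] at hw₂
      simpa [hφ₂, hφ₂'] using hw₂
    rw [e₂, add_zero] at e₁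
    rw [hw, e₁, e₂, zero_smul, zero_smul, add_zero]
  exact ⟨s, s', t, t', hss', hs't, htt', ht's, hA.gradedIsoTo hE hXA hφ, ⟨e, he⟩,
    hC.gradedIsoTo hE hXC hφ'⟩

end Extension

/-- Let `0 → A → B → C → 0` be a non-split short exact sequence of graded `Λ`-modules (with
degree-preserving maps) in which `A` and `C` are indecomposable graded Cohen–Macaulay
`Λ`-modules. Then there exist integers `s < s' < t < t' < s + n` with `A ≅ (s,t)`,
`B ≅ (s,t') ⊕ (s',t)` and `C ≅ (s',t')` as graded `Λ`-modules (in the extended notation). -/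
theorem statement16 (K : Type) [Field K] (n : ℕ) (hn : 3 ≤ n)
    (Λ : Subalgebra (Polynomial K) (Matrix (Fin n) (Fin n) (RatFunc K)))
    (hΛ : (Λ : Set (Matrix (Fin n) (Fin n) (RatFunc K))) = lambdaCarrier K n)
    (E : ℕ → ℕ → Submodule ↥Λ (Fin n → RatFunc K))
    (hE : ∀ i j : ℕ, 1 ≤ i → i < j → j ≤ n →
      (E i j : Set (Fin n → RatFunc K)) = ijSet K n i j)
    -- the graded modules `A`, `B`, `C`
    (A : Type u) [AddCommGroup A] [Module ↥Λ A]
    [Module (Polynomial K) A] [IsScalarTower (Polynomial K) ↥Λ A]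
    (gA : ℤ → AddSubgroup A) (hgA : IsModGrading Λ A gA)
    (B : Type u) [AddCommGroup B] [Module ↥Λ B]
    (gB : ℤ → AddSubgroup B) (hgB : IsModGrading Λ B gB)
    (C : Type u) [AddCommGroup C] [Module ↥Λ C]
    [Module (Polynomial K) C] [IsScalarTower (Polynomial K) ↥Λ C]
    (gC : ℤ → AddSubgroup C) (hgC : IsModGrading Λ C gC)
    -- `A` and `C` are Cohen–Macaulay and indecomposable as graded modules
    (hAfin : Module.Finite (Polynomial K) A) (hAtf : NoZeroSMulDivisors (Polynomial K) A)
    (hAind : GradedIndecomposable Λ A gA)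
    (hCfin : Module.Finite (Polynomial K) C) (hCtf : NoZeroSMulDivisors (Polynomial K) C)
    (hCind : GradedIndecomposable Λ C gC)
    -- a short exact sequence `0 → A → B → C → 0` of degree-preserving maps
    (f : A →ₗ[↥Λ] B) (g : B →ₗ[↥Λ] C)
    (hfdeg : ∀ (m : ℤ), ∀ v ∈ gA m, f v ∈ gB m)
    (hgdeg : ∀ (m : ℤ), ∀ v ∈ gB m, g v ∈ gC m)
    (hf : Function.Injective f) (hg : Function.Surjective g)
    (hexact : LinearMap.range f = LinearMap.ker g)
    -- which is non-split in the graded sense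
    (hnonsplit : ¬ ∃ sec : C →ₗ[↥Λ] B,
      g ∘ₗ sec = LinearMap.id ∧ ∀ (m : ℤ), ∀ v ∈ gC m, sec v ∈ gB m) :
    ∃ s s' t t' : ℤ, s < s' ∧ s' < t ∧ t < t' ∧ t' < s + n ∧
      GradedIsoTo Λ E A gA s t ∧
      GradedIsoToSum Λ E B gB s t' s' t ∧
      GradedIsoTo Λ E C gC s' t' := by
  let : Module K[X] B := Module.compHom B (algebraMap K[X] Λ)
  have : IsScalarTower K[X] Λ B := ⟨fun p u b => by
    rw [Algebra.smul_def, mul_smul]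
    rfl⟩
  let : Module K A := Module.compHom A (Polynomial.C : K →+* K[X])
  let : Module K B := Module.compHom B (Polynomial.C : K →+* K[X])
  let : Module K C := Module.compHom C (Polynomial.C : K →+* K[X])
  have tower (V : Type u) [AddCommGroup V] [Module K[X] V] :
      let _ : Module K V := Module.compHom V (Polynomial.C : K →+* K[X])
      IsScalarTower K K[X] V := by
    intro _
    exact ⟨fun c p a => by
      rw [Polynomial.smul_eq_C_mul, mul_smul]
      rfl⟩
  have := tower A
  have := tower B
  have := tower C
  have hXA : ∀ a : A, (X : K[X]) • a = 0 → a = 0 := fun a h =>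
    (smul_eq_zero.1 h).resolve_left Polynomial.X_ne_zero
  have hXC : ∀ a : C, (X : K[X]) • a = 0 → a = 0 := fun a h =>
    (smul_eq_zero.1 h).resolve_left Polynomial.X_ne_zero
  have hXB : ∀ b : B, (X : K[X]) • b = 0 → b = 0 := fun b h => by
    have hb : b ∈ LinearMap.ker g := hXC _ (by rw [← LinearMap.map_smul_of_tower, h, map_zero])
    rw [← hexact] at hb
    obtain ⟨a, rfl⟩ := hb
    rw [← LinearMap.map_smul_of_tower] at h
    rw [hXA a (hf (h.trans (map_zero f).symm)), map_zero]
  exact exists_isSummand_of_nonsplit hn hΛ hE (hgA := hgA) (hgB := hgB) (hgC := hgC) hXA hXB hXC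
    hAfin hCfin hAind hCind f g hfdeg hgdeg hf hg hexact hnonsplit
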